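/- arXiv:2009.08568 — 4 statements merged into one kernel-verified Lean document; each statement's English description precedes it below -/
import Mathlib

section
/- Let B be the Moore–Penrose pseudoinverse of A, let G be the Moore–Penrose pseudoinverse of AAᵀ, let Ω be a symmetric p×p real matrix, and define V = {s ∈ ℝ^p : B s ≤ 0 and ‖Ω G s‖₁ ≤ 1}. Then the image set G·V = {G s : s ∈ V} is nonempty, closed, convex, contains no lines, and the zero vector is one of its extreme points. -/
open Matrix

/-!
Uniqueness of the Moore–Penrose inverse gives `B = Aᵀ G`, so that `G '' V` is the intersection of
the range of `G` with the closed convex sets `{x | Aᵀ x ≤ 0}` and `{x | ‖Ω x‖₁ ≤ 1}`.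
Since `G A Aᵀ G = G`, the map `Aᵀ` is injective on the range of `G`; it sends the image into the
nonpositive orthant, whose greatest element `0` is an extreme point, and extremality of `0` pulls
back along `Aᵀ`. Finally, in a closed convex set, the direction of any line can be followed from
every point of the set, so that an extreme point rules out lines.
-/

section ConvexSets

lemma mem_extremePoints_of_isGreatest {𝕜 E : Type*} [Semiring 𝕜] [PartialOrder 𝕜]
    [AddCommMonoid E] [PartialOrder E] [IsOrderedCancelAddMonoid E] [Module 𝕜 E]
    [PosSMulStrictMono 𝕜 E] {s : Set E} {a : E} (ha : IsGreatest s a) :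
    a ∈ s.extremePoints 𝕜 := by
  refine ⟨ha.1, fun x hx y hy ⟨r, t, hr, ht, hrt, h⟩ ↦ ?_⟩
  by_contra hne
  have hlt : r • x + t • y < r • a + t • a :=
    add_lt_add_of_lt_of_le (smul_lt_smul_of_pos_left ((ha.2 hx).lt_of_ne hne) hr)
      (smul_le_smul_of_nonneg_left (ha.2 hy) ht.le)
  rw [h, ← add_smul, hrt, one_smul] at hlt
  exact hlt.false

lemma mem_extremePoints_of_injOn {𝕜 E F : Type*} [Semiring 𝕜] [PartialOrder 𝕜]
    [AddCommMonoid E] [Module 𝕜 E] [AddCommMonoid F] [Module 𝕜 F] {f : E →ₗ[𝕜] F} {s : Set E}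
    {x : E} (hf : Set.InjOn f s) (hx : x ∈ s) (hfx : f x ∈ (f '' s).extremePoints 𝕜) :
    x ∈ s.extremePoints 𝕜 := by
  refine ⟨hx, fun y hy z hz hxyz ↦ hf hy hx ?_⟩
  refine hfx.2 (Set.mem_image_of_mem f hy) (Set.mem_image_of_mem f hz) ?_
  obtain ⟨a, b, ha, hb, hab, rfl⟩ := hxyz
  exact ⟨a, b, ha, hb, hab, by rw [map_add, map_smul, map_smul]⟩

variable {E : Type*} [AddCommGroup E] [Module ℝ E] [TopologicalSpace E] [ContinuousAdd E]
  [ContinuousSMul ℝ E] {s : Set E} {x y v : E}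

open Filter Topology in
lemma add_mem_of_line_subset (hs : IsClosed s) (hsc : Convex ℝ s)
    (hline : ∀ t : ℝ, x + t • v ∈ s) (hy : y ∈ s) : y + v ∈ s := by
  -- `y + v` is the limit as `r → 0⁺` of the points `(1 - r) y + r (x + r⁻¹ v)` of `s`.
  have hlim : Tendsto (fun r : ℝ ↦ (1 - r) • y + r • x + v) (𝓝[>] 0) (𝓝 (y + v)) := by
    have hcont : Continuous fun r : ℝ ↦ (1 - r) • y + r • x + v := by fun_prop
    refine Tendsto.mono_left ?_ nhdsWithin_le_nhds
    simpa using hcont.tendsto 0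
  refine hs.mem_of_tendsto hlim ?_
  filter_upwards [Ioo_mem_nhdsGT one_pos] with r ⟨hr0, hr1⟩
  have hmem := hsc hy (hline r⁻¹) (sub_nonneg.2 hr1.le) hr0.le (sub_add_cancel 1 r)
  rwa [smul_add, smul_inv_smul₀ hr0.ne', ← add_assoc] at hmem

lemma not_line_subset_of_mem_extremePoints (hs : IsClosed s) (hsc : Convex ℝ s)
    (hy : y ∈ s.extremePoints ℝ) (hv : v ≠ 0) : ¬ ∀ t : ℝ, x + t • v ∈ s := by
  intro hline
  have hadd : y + v ∈ s := add_mem_of_line_subset hs hsc hline hy.1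
  have hsub : y + -v ∈ s :=
    add_mem_of_line_subset hs hsc (fun t ↦ by simpa using hline (-t)) hy.1
  have hmid : y ∈ openSegment ℝ (y + v) (y + -v) :=
    ⟨1 / 2, 1 / 2, by norm_num, by norm_num, by norm_num, by module⟩
  exact hv (add_eq_left.1 (hy.2 hadd hsub hmid))

end ConvexSets

section MoorePenrose

variable {m n R : Type*} [Fintype m] [Fintype n]

/-- `B` is the Moore–Penrose inverse of the matrix `A`, expressed by the four Penrose equations.
The adjoint is the conjugate transpose, so that real and complex matrices are both covered. -/
structure IsMoorePenroseInverse [NonUnitalSemiring R] [StarRing R]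
    (A : Matrix m n R) (B : Matrix n m R) : Prop where
  mul_inv_mul_self : A * B * A = A
  inv_mul_mul_inv : B * A * B = B
  isHermitian_mul_inv : (A * B).IsHermitian
  isHermitian_inv_mul : (B * A).IsHermitian

namespace IsMoorePenroseInverse

section Semiring

variable [NonUnitalSemiring R] [StarRing R] {A : Matrix m n R} {B C : Matrix n m R}

lemma conjTranspose (h : IsMoorePenroseInverse A B) : IsMoorePenroseInverse Aᴴ Bᴴ where
  mul_inv_mul_self := by
    rw [← conjTranspose_mul, ← conjTranspose_mul, ← Matrix.mul_assoc, h.mul_inv_mul_self]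
  inv_mul_mul_inv := by
    rw [← conjTranspose_mul, ← conjTranspose_mul, ← Matrix.mul_assoc, h.inv_mul_mul_inv]
  isHermitian_mul_inv := by
    rw [← conjTranspose_mul]
    exact h.isHermitian_inv_mul.conjTranspose
  isHermitian_inv_mul := by
    rw [← conjTranspose_mul]
    exact h.isHermitian_mul_inv.conjTranspose

lemma mul_inv_unique (hB : IsMoorePenroseInverse A B) (hC : IsMoorePenroseInverse A C) :
    A * B = A * C :=
  calc A * B = A * C * (A * B) := by rw [← Matrix.mul_assoc, hC.mul_inv_mul_self]
    _ = (A * B * (A * C))ᴴ := by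
      rw [conjTranspose_mul, hB.isHermitian_mul_inv.eq, hC.isHermitian_mul_inv.eq]
    _ = A * C := by rw [← Matrix.mul_assoc, hB.mul_inv_mul_self, hC.isHermitian_mul_inv.eq]

lemma inv_mul_unique (hB : IsMoorePenroseInverse A B) (hC : IsMoorePenroseInverse A C) :
    B * A = C * A := by
  rw [← conjTranspose_inj, conjTranspose_mul, conjTranspose_mul]
  exact hB.conjTranspose.mul_inv_unique hC.conjTranspose

theorem unique (hB : IsMoorePenroseInverse A B) (hC : IsMoorePenroseInverse A C) : B = C :=
  calc B = B * A * B := hB.inv_mul_mul_inv.symm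
    _ = C * A * C := by
      rw [hB.inv_mul_unique hC, Matrix.mul_assoc, hB.mul_inv_unique hC, Matrix.mul_assoc]
    _ = C := hC.inv_mul_mul_inv

lemma isHermitian_inv {A B : Matrix m m R} (h : IsMoorePenroseInverse A B)
    (hA : A.IsHermitian) : B.IsHermitian :=
  unique (hA.eq ▸ h.conjTranspose) h

lemma injOn_conjTranspose_mulVec_range {A : Matrix m n R} {G : Matrix m m R}
    (hG : IsMoorePenroseInverse (A * Aᴴ) G) : Set.InjOn Aᴴ.mulVec (Set.range G.mulVec) := by
  have hleft : Set.LeftInvOn (G * A).mulVec Aᴴ.mulVec (Set.range G.mulVec) := by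
    rintro _ ⟨s, rfl⟩
    rw [mulVec_mulVec, mulVec_mulVec, Matrix.mul_assoc G, hG.inv_mul_mul_inv]
  exact hleft.injOn

end Semiring

theorem conjTranspose_mul_of_self_mul_conjTranspose [Ring R] [PartialOrder R] [StarRing R]
    [StarOrderedRing R] [NoZeroDivisors R] {A : Matrix m n R} {G : Matrix m m R}
    (hG : IsMoorePenroseInverse (A * Aᴴ) G) : IsMoorePenroseInverse A (Aᴴ * G) where
  mul_inv_mul_self := by
    classical
    have hzero : (A * Aᴴ * G - 1) * (A * Aᴴ) = 0 := by
      rw [Matrix.sub_mul, hG.mul_inv_mul_self, Matrix.one_mul, sub_self]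
    rwa [mul_self_mul_conjTranspose_eq_zero, Matrix.sub_mul, Matrix.one_mul, sub_eq_zero,
      Matrix.mul_assoc A] at hzero
  inv_mul_mul_inv := by
    simpa only [Matrix.mul_assoc] using congrArg (Aᴴ * ·) hG.inv_mul_mul_inv
  isHermitian_mul_inv := by
    rw [← Matrix.mul_assoc]
    exact hG.isHermitian_mul_inv
  isHermitian_inv_mul :=
    isHermitian_conjTranspose_mul_mul A (hG.isHermitian_inv (isHermitian_mul_conjTranspose_self A))

lemma of_transpose_eq [NonUnitalCommSemiring R] [StarRing R] [TrivialStar R] {A : Matrix m n R}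
    {B : Matrix n m R} (h₁ : A * B * A = A) (h₂ : B * A * B = B) (h₃ : (A * B)ᵀ = A * B)
    (h₄ : (B * A)ᵀ = B * A) : IsMoorePenroseInverse A B :=
  ⟨h₁, h₂, (conjTranspose_eq_transpose_of_trivial _).trans h₃,
    (conjTranspose_eq_transpose_of_trivial _).trans h₄⟩

end IsMoorePenroseInverse

end MoorePenrose

lemma image_mulVec_setOf_mul_nonpos {k m n R : Type*} [Fintype k] [Fintype m]
    [NonUnitalSemiring R] [Preorder R] (C : Matrix n m R) (G : Matrix m k R) (K : Set (m → R)) :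
    G.mulVec '' {s | (C * G) *ᵥ s ≤ 0 ∧ G *ᵥ s ∈ K} =
      C.mulVec ⁻¹' Set.Iic 0 ∩ K ∩ Set.range G.mulVec := by
  rw [← Set.image_preimage_eq_inter_range]
  simp only [← mulVec_mulVec]
  rfl

lemma convex_setOf_sum_abs_le {ι E : Type*} [Fintype ι] [AddCommGroup E] [Module ℝ E]
    (f : E →ₗ[ℝ] ι → ℝ) (c : ℝ) : Convex ℝ {x | ∑ i, |f x i| ≤ c} := by
  have hball := (convex_closedBall (0 : PiLp 1 fun _ : ι ↦ ℝ) c).linear_preimage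
    ((WithLp.linearEquiv 1 ℝ (ι → ℝ)).symm.toLinearMap ∘ₗ f)
  simpa [Set.preimage, PiLp.norm_eq_of_L1] using hball

theorem stmt_6_general {m n : Type*} [Fintype m] [Fintype n] {A : Matrix m n ℝ}
    {B : Matrix n m ℝ} {G : Matrix m m ℝ} (hB : IsMoorePenroseInverse A B)
    (hG : IsMoorePenroseInverse (A * Aᵀ) G) {K V : Set (m → ℝ)} (hK : IsClosed K)
    (hKc : Convex ℝ K) (hK0 : 0 ∈ K) (hV : V = {s | B *ᵥ s ≤ 0 ∧ G *ᵥ s ∈ K}) :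
    (G.mulVec '' V).Nonempty ∧ IsClosed (G.mulVec '' V) ∧ Convex ℝ (G.mulVec '' V) ∧
      (¬ ∃ x ∈ G.mulVec '' V, ∃ v : m → ℝ, v ≠ 0 ∧ ∀ t : ℝ, x + t • v ∈ G.mulVec '' V) ∧
      (0 : m → ℝ) ∈ Set.extremePoints ℝ (G.mulVec '' V) := by
  rw [← conjTranspose_eq_transpose_of_trivial] at hG
  have hBG : B = Aᴴ * G := hB.unique hG.conjTranspose_mul_of_self_mul_conjTranspose
  have himage : G.mulVec '' V = Aᴴ.mulVec ⁻¹' Set.Iic 0 ∩ K ∩ Set.range G.mulVec := by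
    rw [hV, hBG, image_mulVec_setOf_mul_nonpos]
  rw [himage]
  set S := Aᴴ.mulVec ⁻¹' Set.Iic 0 ∩ K ∩ Set.range G.mulVec
  have hclosed : IsClosed S :=
    ((isClosed_Iic.preimage (by fun_prop)).inter hK).inter
      (LinearMap.range G.mulVecLin).closed_of_finiteDimensional
  have hconvex : Convex ℝ S :=
    (((convex_Iic 0).linear_preimage Aᴴ.mulVecLin).inter hKc).inter
      (LinearMap.range G.mulVecLin).convex
  have hzero : 0 ∈ S := ⟨⟨(mulVec_zero Aᴴ).le, hK0⟩, 0, mulVec_zero G⟩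
  have hgreatest : IsGreatest (Aᴴ.mulVecLin '' S) (Aᴴ.mulVecLin 0) := by
    refine ⟨Set.mem_image_of_mem _ hzero, ?_⟩
    rintro _ ⟨x, ⟨⟨hx, -⟩, -⟩, rfl⟩
    rwa [map_zero]
  have hextreme : 0 ∈ S.extremePoints ℝ :=
    mem_extremePoints_of_injOn
      (hG.injOn_conjTranspose_mulVec_range.mono Set.inter_subset_right) hzero
      (mem_extremePoints_of_isGreatest hgreatest)
  exact ⟨⟨0, hzero⟩, hclosed, hconvex,
    fun ⟨_, _, _, hv, hline⟩ ↦
      not_line_subset_of_mem_extremePoints hclosed hconvex hextreme hv hline,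
    hextreme⟩

/-- Supplemental Lemma (lm:Vpoly): for `B` the Moore–Penrose pseudoinverse of `A`, `G` the
Moore–Penrose pseudoinverse of `A Aᵀ`, and a symmetric matrix `Ω`, the image under `G` of
`V = {s : B s ≤ 0, ‖Ω G s‖₁ ≤ 1}` is nonempty, closed, convex, contains no lines, and has
the zero vector among its extreme points. -/
theorem stmt_6 (p d : ℕ) (A : Matrix (Fin p) (Fin d) ℝ) (B : Matrix (Fin d) (Fin p) ℝ)
    (G Ω : Matrix (Fin p) (Fin p) ℝ)
    (hB1 : A * B * A = A) (hB2 : B * A * B = B)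
    (hB3 : (A * B)ᵀ = A * B) (hB4 : (B * A)ᵀ = B * A)
    (hG1 : A * Aᵀ * G * (A * Aᵀ) = A * Aᵀ) (hG2 : G * (A * Aᵀ) * G = G)
    (hG3 : (A * Aᵀ * G)ᵀ = A * Aᵀ * G) (hG4 : (G * (A * Aᵀ))ᵀ = G * (A * Aᵀ))
    (hΩ : Ωᵀ = Ω)
    (V : Set (Fin p → ℝ))
    (hV : V = {s | (∀ i, B.mulVec s i ≤ 0) ∧ ∑ i, |Ω.mulVec (G.mulVec s) i| ≤ 1}) :
    (G.mulVec '' V).Nonempty ∧ IsClosed (G.mulVec '' V) ∧ Convex ℝ (G.mulVec '' V) ∧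
      (¬ ∃ x ∈ G.mulVec '' V, ∃ v : Fin p → ℝ, v ≠ 0 ∧ ∀ t : ℝ, x + t • v ∈ G.mulVec '' V) ∧
      (0 : Fin p → ℝ) ∈ Set.extremePoints ℝ (G.mulVec '' V) :=
  stmt_6_general (K := {x | ∑ i, |(Ω *ᵥ x) i| ≤ 1})
    (.of_transpose_eq hB1 hB2 hB3 hB4) (.of_transpose_eq hG1 hG2 hG3 hG4)
    (isClosed_le (by fun_prop) continuous_const) (convex_setOf_sum_abs_le Ω.mulVecLin 1)
    (by simp) hV
end

section
/- Let Z = (Z₁,…,Z_d) ∈ ℝ^d be jointly Gaussian with E[Z_j] ≥ 0 and Var(Z_j) = σ² > 0 for all 1 ≤ j ≤ d, let S = max_{1≤j≤d} Z_j, and let m be a median of S. Then the distribution of S is absolutely continuous with respect to Lebesgue measure, and it admits a density that is bounded on all of ℝ by (2/σ)·max{m/σ, 1}. -/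
open MeasureTheory ProbabilityTheory
open scoped NNReal ENNReal

open Set Filter Topology
open scoped Pointwise

/-!
Let `F` be the distribution function of `S` and `κ z = (2/σ) max(z/σ, 1)`. Subtracting from `Z` its
linear regression on `Z_j` leaves a residual independent of `Z_j`. Equal variances make `Z_j` the
coordinate with the largest regression coefficient, so given the residual, the event that `j` is the
first maximising index is an upper set of values of `Z_j`. A Mills-ratio bound for `Z_j` therefore
survives the restriction to this event; summing over `j`, the density `f` of `S` satisfies
`f ≤ κ (1 - F)`.

Gaussian measures satisfy the Prékopa–Leindler inequality, so `F` is log-concave and `f / F` is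
nonincreasing. Beyond the median, `f ≤ F · f(m) / F(m) ≤ κ(m) (1 - F(m)) / F(m) ≤ κ(m)`; before it,
`f ≤ κ ≤ κ(m)`. The existence of `f` is not available in advance, so both inequalities are used for
increments of `F`, which gives `F y - F x ≤ κ(m) (y - x)`.
-/

section BrunnMinkowski

-- After translation the two summands meet only in the point `sSup K + sInf L`.
lemma volume_add_volume_le_volume_add_of_isCompact {K L : Set ℝ} (hK : IsCompact K)
    (hL : IsCompact L) (hK₀ : K.Nonempty) (hL₀ : L.Nonempty) :
    volume K + volume L ≤ volume (K + L) := by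
  have hk := hK.sSup_mem hK₀
  have hl := hL.sInf_mem hL₀
  set k := sSup K
  set l := sInf L
  have overlap : (l +ᵥ K) ∩ (k +ᵥ L) ⊆ {k + l} := by
    rintro _ ⟨⟨x, hx, rfl⟩, y, hy, hxy⟩
    have hxk : x ≤ k := le_csSup hK.bddAbove hx
    have hly : l ≤ y := csInf_le hL.bddBelow hy
    simp only [vadd_eq_add, mem_singleton_iff] at hxy ⊢
    linarith
  have disjoint : AEDisjoint volume (l +ᵥ K) (k +ᵥ L) :=
    measure_mono_null overlap (measure_singleton _)
  calc volume K + volume L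
      = volume ((l +ᵥ K) ∪ (k +ᵥ L)) := by
        rw [measure_union₀ (hL.vadd k).measurableSet.nullMeasurableSet disjoint,
          measure_vadd, measure_vadd]
    _ ≤ volume (K + L) := by
        refine measure_mono (union_subset ?_ ?_)
        · rintro _ ⟨x, hx, rfl⟩
          exact ⟨x, hx, l, hl, add_comm x l⟩
        · rintro _ ⟨y, hy, rfl⟩
          exact ⟨k, hk, y, hy, rfl⟩

theorem volume_add_volume_le_volume_add {A B : Set ℝ} (hA : MeasurableSet A) (hB : MeasurableSet B)
    (hA₀ : A.Nonempty) (hB₀ : B.Nonempty) : volume A + volume B ≤ volume (A + B) := by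
  obtain ⟨a, ha⟩ := hA₀
  obtain ⟨b, hb⟩ := hB₀
  rw [hA.measure_eq_iSup_isCompact, hB.measure_eq_iSup_isCompact]
  simp only [iSup_and']
  refine ENNReal.biSup_add_biSup_le' ⟨∅, empty_subset A, isCompact_empty⟩
    ⟨∅, empty_subset B, isCompact_empty⟩ ?_
  rintro K ⟨hKA, hK⟩ L ⟨hLB, hL⟩
  calc volume K + volume L
      ≤ volume (insert a K) + volume (insert b L) := by gcongr <;> exact subset_insert _ _
    _ ≤ volume (insert a K + insert b L) :=
        volume_add_volume_le_volume_add_of_isCompact (hK.insert a) (hL.insert b)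
          (insert_nonempty a K) (insert_nonempty b L)
    _ ≤ volume (A + B) :=
        measure_mono (add_subset_add (insert_subset ha hKA) (insert_subset hb hLB))

lemma volume_smul_add_smul_le {A B C : Set ℝ} (hA : MeasurableSet A) (hB : MeasurableSet B)
    (hA₀ : A.Nonempty) (hB₀ : B.Nonempty) {a b : ℝ} (ha : 0 < a) (hb : 0 < b)
    (hC : ∀ x ∈ A, ∀ y ∈ B, a * x + b * y ∈ C) :
    ENNReal.ofReal a * volume A + ENNReal.ofReal b * volume B ≤ volume C := by
  calc ENNReal.ofReal a * volume A + ENNReal.ofReal b * volume B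
      = volume (a • A) + volume (b • B) := by
        simp [Measure.addHaar_smul, abs_of_pos, ha, hb]
    _ ≤ volume (a • A + b • B) :=
        volume_add_volume_le_volume_add (hA.const_smul₀ a) (hB.const_smul₀ b) hA₀.smul_set
          hB₀.smul_set
    _ ≤ volume C := by
        refine measure_mono ?_
        rintro _ ⟨_, ⟨x, hx, rfl⟩, _, ⟨y, hy, rfl⟩, rfl⟩
        exact hC x hx y hy

end BrunnMinkowski

lemma lintegral_min_one_eq_lintegral_meas_lt {α : Type*} [MeasurableSpace α] (μ : Measure α)
    {u : α → ℝ≥0∞} (hu : Measurable u) :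
    ∫⁻ x, min (u x) 1 ∂μ = ∫⁻ t in Ioo (0 : ℝ) 1, μ {x | ENNReal.ofReal t < u x} := by
  have min_ne_top : ∀ x, min (u x) 1 ≠ ∞ := fun x => by simp
  have superlevel : ∀ t ∈ Ioi (0 : ℝ), μ {x | t < (min (u x) 1).toReal} =
      (Iio 1).indicator (fun t => μ {x | ENNReal.ofReal t < u x}) t := by
    intro t _
    simp only [← ENNReal.ofReal_lt_iff_lt_toReal (le_of_lt ‹_›) (min_ne_top _), lt_min_iff,
      ENNReal.ofReal_lt_one]
    by_cases ht : t < 1 <;> simp [ht]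
  calc ∫⁻ x, min (u x) 1 ∂μ
      = ∫⁻ x, ENNReal.ofReal (min (u x) 1).toReal ∂μ := by
        simp only [ENNReal.ofReal_toReal (min_ne_top _)]
    _ = ∫⁻ t in Ioi (0 : ℝ), μ {x | t < (min (u x) 1).toReal} :=
        lintegral_eq_lintegral_meas_lt μ (.of_forall fun _ => ENNReal.toReal_nonneg)
          (hu.min measurable_const).ennreal_toReal.aemeasurable
    _ = ∫⁻ t in Ioo (0 : ℝ) 1, μ {x | ENNReal.ofReal t < u x} := by
        rw [setLIntegral_congr_fun measurableSet_Ioi superlevel,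
          setLIntegral_indicator measurableSet_Iio, inter_comm, Ioi_inter_Iio]

lemma ennreal_geom_mean_le_arith_mean {a b : ℝ} (ha : 0 < a) (hb : 0 < b) (hab : a + b = 1)
    (x y : ℝ≥0∞) :
    x ^ a * y ^ b ≤ ENNReal.ofReal a * x + ENNReal.ofReal b * y := by
  have conj : (a⁻¹).HolderConjugate b⁻¹ := by
    rw [Real.holderConjugate_iff]
    exact ⟨(one_lt_inv₀ ha).2 (by linarith), by simpa using hab⟩
  have young := ENNReal.young_inequality (x ^ a) (y ^ b) conj
  rw [← ENNReal.rpow_mul, ← ENNReal.rpow_mul, mul_inv_cancel₀ ha.ne', mul_inv_cancel₀ hb.ne',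
    ENNReal.rpow_one, ENNReal.rpow_one, ENNReal.ofReal_inv_of_pos ha,
    ENNReal.ofReal_inv_of_pos hb, ENNReal.div_eq_inv_mul, ENNReal.div_eq_inv_mul, inv_inv,
    inv_inv] at young
  exact young

section PrekopaLeindlerReal

variable {a b : ℝ} {f g h : ℝ → ℝ≥0∞}

lemma volume_superlevel_add_le (ha : 0 < a) (hb : 0 < b) (hab : a + b = 1)
    (hf : Measurable f) (hg : Measurable g) (hfgh : ∀ x y, f x ^ a * g y ^ b ≤ h (a * x + b * y))
    {t : ℝ≥0∞} (hft : {x | t < f x}.Nonempty) (hgt : {x | t < g x}.Nonempty) :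
    ENNReal.ofReal a * volume {x | t < f x} + ENNReal.ofReal b * volume {x | t < g x} ≤
      volume {x | t < h x} := by
  refine volume_smul_add_smul_le (measurableSet_lt measurable_const hf)
    (measurableSet_lt measurable_const hg) hft hgt ha hb fun x hx y hy => ?_
  calc t = t ^ a * t ^ b := by
        rw [← ENNReal.rpow_add_of_nonneg _ _ ha.le hb.le, hab, ENNReal.rpow_one]
    _ < f x ^ a * g y ^ b :=
        ENNReal.mul_lt_mul (ENNReal.rpow_lt_rpow hx ha) (ENNReal.rpow_lt_rpow hy hb)
    _ ≤ h (a * x + b * y) := hfgh x y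

lemma lintegral_add_le_of_iSup_eq_one (ha : 0 < a) (hb : 0 < b) (hab : a + b = 1)
    (hf : Measurable f) (hg : Measurable g) (hh : Measurable h)
    (hfgh : ∀ x y, f x ^ a * g y ^ b ≤ h (a * x + b * y))
    (hf₁ : ⨆ x, f x = 1) (hg₁ : ⨆ x, g x = 1) :
    ENNReal.ofReal a * (∫⁻ x, f x) + ENNReal.ofReal b * ∫⁻ x, g x ≤ ∫⁻ x, h x := by
  have measurable_superlevel (u : ℝ → ℝ≥0∞) :
      Measurable fun t : ℝ => volume {x | ENNReal.ofReal t < u x} :=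
    Antitone.measurable fun s t hst =>
      measure_mono fun x hx => (ENNReal.ofReal_le_ofReal hst).trans_lt hx
  have layer_cake {u : ℝ → ℝ≥0∞} (hu : Measurable u) (hu₁ : ⨆ x, u x = 1) :
      ∫⁻ x, u x = ∫⁻ t in Ioo (0 : ℝ) 1, volume {x | ENNReal.ofReal t < u x} := by
    rw [← lintegral_min_one_eq_lintegral_meas_lt _ hu]
    exact lintegral_congr fun x => (min_eq_left (hu₁ ▸ le_iSup u x)).symm
  have superlevel_nonempty {u : ℝ → ℝ≥0∞} (hu₁ : ⨆ x, u x = 1) {t : ℝ} (ht : t < 1) :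
      {x | ENNReal.ofReal t < u x}.Nonempty := by
    rw [← ENNReal.ofReal_lt_one, ← hu₁, lt_iSup_iff] at ht
    exact ht
  calc ENNReal.ofReal a * (∫⁻ x, f x) + ENNReal.ofReal b * ∫⁻ x, g x
      = ∫⁻ t in Ioo (0 : ℝ) 1, (ENNReal.ofReal a * volume {x | ENNReal.ofReal t < f x}
          + ENNReal.ofReal b * volume {x | ENNReal.ofReal t < g x}) := by
        rw [layer_cake hf hf₁, layer_cake hg hg₁,
          lintegral_add_left ((measurable_superlevel f).const_mul _),
          lintegral_const_mul _ (measurable_superlevel f),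
          lintegral_const_mul _ (measurable_superlevel g)]
    _ ≤ ∫⁻ t in Ioo (0 : ℝ) 1, volume {x | ENNReal.ofReal t < h x} :=
        setLIntegral_mono (measurable_superlevel h) fun t ht =>
          volume_superlevel_add_le ha hb hab hf hg hfgh (superlevel_nonempty hf₁ ht.2)
            (superlevel_nonempty hg₁ ht.2)
    _ = ∫⁻ x, min (h x) 1 := (lintegral_min_one_eq_lintegral_meas_lt _ hh).symm
    _ ≤ ∫⁻ x, h x := lintegral_mono fun x => min_le_left _ _

lemma lintegral_rpow_mul_le_of_iSup_ne_top (ha : 0 < a) (hb : 0 < b) (hab : a + b = 1)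
    (hf : Measurable f) (hg : Measurable g) (hh : Measurable h)
    (hfgh : ∀ x y, f x ^ a * g y ^ b ≤ h (a * x + b * y))
    (hf_top : ⨆ x, f x ≠ ∞) (hg_top : ⨆ x, g x ≠ ∞) :
    (∫⁻ x, f x) ^ a * (∫⁻ x, g x) ^ b ≤ ∫⁻ x, h x := by
  rcases eq_or_ne (⨆ x, f x) 0 with hf₀ | hf₀
  · simp [ENNReal.iSup_eq_zero.1 hf₀, ha]
  rcases eq_or_ne (⨆ x, g x) 0 with hg₀ | hg₀
  · simp [ENNReal.iSup_eq_zero.1 hg₀, hb]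
  set α := ⨆ x, f x
  set β := ⨆ x, g x
  have hα_rpow : α ^ a ≠ 0 ∧ α ^ a ≠ ∞ :=
    ⟨(ENNReal.rpow_pos (pos_iff_ne_zero.2 hf₀) hf_top).ne',
      ENNReal.rpow_ne_top_of_nonneg ha.le hf_top⟩
  have hβ_rpow : β ^ b ≠ 0 ∧ β ^ b ≠ ∞ :=
    ⟨(ENNReal.rpow_pos (pos_iff_ne_zero.2 hg₀) hg_top).ne',
      ENNReal.rpow_ne_top_of_nonneg hb.le hg_top⟩
  have scale (s t : ℝ≥0∞) :
      (α⁻¹ * s) ^ a * (β⁻¹ * t) ^ b = (α ^ a * β ^ b)⁻¹ * (s ^ a * t ^ b) := by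
    rw [ENNReal.mul_rpow_of_nonneg _ _ ha.le, ENNReal.mul_rpow_of_nonneg _ _ hb.le,
      ENNReal.inv_rpow, ENNReal.inv_rpow, ENNReal.mul_inv (.inl hα_rpow.1) (.inl hα_rpow.2),
      mul_mul_mul_comm]
  have normalized := lintegral_add_le_of_iSup_eq_one (f := fun x => α⁻¹ * f x)
    (g := fun x => β⁻¹ * g x) (h := fun x => (α ^ a * β ^ b)⁻¹ * h x) ha hb hab
    (hf.const_mul _) (hg.const_mul _) (hh.const_mul _)
    (fun x y => by rw [scale]; gcongr; exact hfgh x y)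
    (by rw [← ENNReal.mul_iSup, ENNReal.inv_mul_cancel hf₀ hf_top])
    (by rw [← ENNReal.mul_iSup, ENNReal.inv_mul_cancel hg₀ hg_top])
  have scaled := (ennreal_geom_mean_le_arith_mean ha hb hab _ _).trans normalized
  rw [lintegral_const_mul _ hf, lintegral_const_mul _ hg, lintegral_const_mul _ hh, scale] at scaled
  refine (ENNReal.mul_le_mul_iff_right ?_ ?_).1 scaled
  · exact ENNReal.inv_ne_zero.2 (ENNReal.mul_ne_top hα_rpow.2 hβ_rpow.2)
  · exact ENNReal.inv_ne_top.2 (mul_ne_zero hα_rpow.1 hβ_rpow.1)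

lemma tendsto_lintegral_min_natCast {α : Type*} [MeasurableSpace α] (μ : Measure α)
    {u : α → ℝ≥0∞} (hu : Measurable u) :
    Tendsto (fun n : ℕ => ∫⁻ x, min (u x) n ∂μ) atTop (𝓝 (∫⁻ x, u x ∂μ)) := by
  refine lintegral_tendsto_of_tendsto_of_monotone
    (fun n => (hu.min measurable_const).aemeasurable)
    (.of_forall fun x m n hmn => by dsimp only; gcongr) (.of_forall fun x => ?_)
  simpa using (tendsto_const_nhds (x := u x)).min ENNReal.tendsto_nat_nhds_top

theorem lintegral_rpow_mul_lintegral_rpow_le (ha : 0 < a) (hb : 0 < b) (hab : a + b = 1)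
    (hf : Measurable f) (hg : Measurable g) (hh : Measurable h)
    (hfgh : ∀ x y, f x ^ a * g y ^ b ≤ h (a * x + b * y)) :
    (∫⁻ x, f x) ^ a * (∫⁻ x, g x) ^ b ≤ ∫⁻ x, h x := by
  rcases eq_or_ne (∫⁻ x, f x) 0 with hf₀ | hf₀
  · simp [hf₀, ha]
  rcases eq_or_ne (∫⁻ x, g x) 0 with hg₀ | hg₀
  · simp [hg₀, hb]
  have truncated (n : ℕ) : (∫⁻ x, min (f x) n) ^ a * (∫⁻ x, min (g x) n) ^ b ≤ ∫⁻ x, h x := by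
    have iSup_ne_top (u : ℝ → ℝ≥0∞) : ⨆ x, min (u x) n ≠ ∞ :=
      ne_top_of_le_ne_top (ENNReal.natCast_ne_top n) (iSup_le fun x => min_le_right _ _)
    refine lintegral_rpow_mul_le_of_iSup_ne_top ha hb hab (hf.min measurable_const)
      (hg.min measurable_const) hh (fun x y => le_trans ?_ (hfgh x y))
      (iSup_ne_top f) (iSup_ne_top g)
    gcongr <;> exact min_le_left _ _
  refine le_of_tendsto' (ENNReal.Tendsto.mul
    ((tendsto_lintegral_min_natCast _ hf).ennrpow_const a) (.inl ?_)
    ((tendsto_lintegral_min_natCast _ hg).ennrpow_const b) (.inl ?_)) truncated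
  · simp [hf₀, ha.le, not_lt]
  · simp [hg₀, hb.le, not_lt]

end PrekopaLeindlerReal

/-- A measure satisfies the Prékopa–Leindler inequality. For measures on a finite-dimensional space
this is log-concavity, and it passes to products and affine images. -/
def SatisfiesPrekopaLeindler {E : Type*} [MeasurableSpace E] [AddCommGroup E] [Module ℝ E]
    (μ : Measure E) : Prop :=
  ∀ ⦃a b : ℝ⦄, 0 < a → 0 < b → a + b = 1 →
    ∀ ⦃f g h : E → ℝ≥0∞⦄, Measurable f → Measurable g → Measurable h →
      (∀ x y, f x ^ a * g y ^ b ≤ h (a • x + b • y)) →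
      (∫⁻ x, f x ∂μ) ^ a * (∫⁻ x, g x ∂μ) ^ b ≤ ∫⁻ x, h x ∂μ

lemma gaussianPDF_rpow_mul_rpow_le (m : ℝ) (v : ℝ≥0) {a b : ℝ} (ha : 0 < a) (hb : 0 < b)
    (hab : a + b = 1) (x y : ℝ) :
    gaussianPDF m v x ^ a * gaussianPDF m v y ^ b ≤ gaussianPDF m v (a * x + b * y) := by
  have convex_sq : (a * x + b * y - m) ^ 2 ≤ a * (x - m) ^ 2 + b * (y - m) ^ 2 := by
    obtain rfl : b = 1 - a := by linarith
    nlinarith [mul_nonneg (mul_pos ha hb).le (sq_nonneg (x - y))]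
  simp only [gaussianPDF, gaussianPDFReal]
  set c := (√(2 * Real.pi * v))⁻¹
  have hc : 0 ≤ c := by positivity
  rw [ENNReal.ofReal_rpow_of_nonneg (by positivity) ha.le,
    ENNReal.ofReal_rpow_of_nonneg (by positivity) hb.le, ← ENNReal.ofReal_mul (by positivity)]
  refine ENNReal.ofReal_le_ofReal ?_
  calc (c * Real.exp (-(x - m) ^ 2 / (2 * v))) ^ a * (c * Real.exp (-(y - m) ^ 2 / (2 * v))) ^ b
      = c * Real.exp (-(a * (x - m) ^ 2 + b * (y - m) ^ 2) / (2 * v)) := by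
        rw [Real.mul_rpow hc (Real.exp_nonneg _), Real.mul_rpow hc (Real.exp_nonneg _),
          mul_mul_mul_comm, ← Real.rpow_add_of_nonneg hc ha.le hb.le, hab, Real.rpow_one,
          ← Real.exp_mul, ← Real.exp_mul, ← Real.exp_add]
        ring_nf
    _ ≤ c * Real.exp (-(a * x + b * y - m) ^ 2 / (2 * v)) := by gcongr

namespace SatisfiesPrekopaLeindler

section Constructions

variable {E F : Type*} [MeasurableSpace E] [AddCommGroup E] [Module ℝ E]
  [MeasurableSpace F] [AddCommGroup F] [Module ℝ F] {μ : Measure E} {ν : Measure F}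

lemma measure_rpow_mul_le (hμ : SatisfiesPrekopaLeindler μ) {a b : ℝ} (ha : 0 < a) (hb : 0 < b)
    (hab : a + b = 1) {A B C : Set E} (hA : MeasurableSet A) (hB : MeasurableSet B)
    (hC : MeasurableSet C) (hABC : ∀ x ∈ A, ∀ y ∈ B, a • x + b • y ∈ C) :
    μ A ^ a * μ B ^ b ≤ μ C := by
  rw [← lintegral_indicator_one hA, ← lintegral_indicator_one hB, ← lintegral_indicator_one hC]
  refine hμ ha hb hab (measurable_one.indicator hA) (measurable_one.indicator hB)
    (measurable_one.indicator hC) fun x y => ?_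
  by_cases hx : x ∈ A
  · by_cases hy : y ∈ B
    · simp [hx, hy, hABC x hx y hy]
    · simp [hy, hb]
  · simp [hx, ha]

lemma withDensity (hμ : SatisfiesPrekopaLeindler μ) {p : E → ℝ≥0∞} (hp : Measurable p)
    (hp_logconcave : ∀ ⦃a b : ℝ⦄, 0 < a → 0 < b → a + b = 1 →
      ∀ x y, p x ^ a * p y ^ b ≤ p (a • x + b • y)) :
    SatisfiesPrekopaLeindler (μ.withDensity p) := by
  intro a b ha hb hab f g h hf hg hh hfgh
  rw [lintegral_withDensity_eq_lintegral_mul _ hp hf,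
    lintegral_withDensity_eq_lintegral_mul _ hp hg, lintegral_withDensity_eq_lintegral_mul _ hp hh]
  refine hμ ha hb hab (hp.mul hf) (hp.mul hg) (hp.mul hh) fun x y => ?_
  calc (p x * f x) ^ a * (p y * g y) ^ b
      = (p x ^ a * p y ^ b) * (f x ^ a * g y ^ b) := by
        rw [ENNReal.mul_rpow_of_nonneg _ _ ha.le, ENNReal.mul_rpow_of_nonneg _ _ hb.le,
          mul_mul_mul_comm]
    _ ≤ p (a • x + b • y) * h (a • x + b • y) :=
        mul_le_mul' (hp_logconcave ha hb hab x y) (hfgh x y)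

lemma prod [SFinite ν] (hμ : SatisfiesPrekopaLeindler μ) (hν : SatisfiesPrekopaLeindler ν) :
    SatisfiesPrekopaLeindler (μ.prod ν) := by
  intro a b ha hb hab f g h hf hg hh hfgh
  rw [lintegral_prod _ hf.aemeasurable, lintegral_prod _ hg.aemeasurable,
    lintegral_prod _ hh.aemeasurable]
  refine hμ ha hb hab hf.lintegral_prod_right' hg.lintegral_prod_right' hh.lintegral_prod_right'
    fun x y => ?_
  exact hν ha hb hab (by fun_prop) (by fun_prop) (by fun_prop) fun z w => hfgh (x, z) (y, w)

lemma map (hμ : SatisfiesPrekopaLeindler μ) (T : E →ᵃ[ℝ] F) (hT : Measurable T) :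
    SatisfiesPrekopaLeindler (μ.map T) := by
  intro a b ha hb hab f g h hf hg hh hfgh
  rw [lintegral_map hf hT, lintegral_map hg hT, lintegral_map hh hT]
  refine hμ ha hb hab (hf.comp hT) (hg.comp hT) (hh.comp hT) fun x y => ?_
  rw [Convex.combo_affine_apply hab]
  exact hfgh (T x) (T y)

lemma of_subsingleton [Subsingleton E] [IsProbabilityMeasure μ] :
    SatisfiesPrekopaLeindler μ := by
  intro a b _ _ _ f g h _ _ _ hfgh
  have lintegral_eq (u : E → ℝ≥0∞) : ∫⁻ x, u x ∂μ = u 0 := by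
    simp [Subsingleton.elim _ (0 : E)]
  rw [lintegral_eq, lintegral_eq, lintegral_eq]
  simpa using hfgh 0 0

end Constructions

lemma pi {n : ℕ} {E : Fin n → Type*} [∀ i, MeasurableSpace (E i)] [∀ i, AddCommGroup (E i)]
    [∀ i, Module ℝ (E i)] {μ : ∀ i, Measure (E i)} [∀ i, IsProbabilityMeasure (μ i)]
    (hμ : ∀ i, SatisfiesPrekopaLeindler (μ i)) : SatisfiesPrekopaLeindler (Measure.pi μ) := by
  induction n with
  | zero => exact of_subsingleton
  | succ n ih =>
    let consEquiv : (E 0 × ∀ i : Fin n, E i.succ) ≃ₗ[ℝ] ∀ i, E i := Fin.consLinearEquiv ℝ E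
    have split : MeasurePreserving (MeasurableEquiv.piFinSuccAbove E 0).symm _ (Measure.pi μ) :=
      (measurePreserving_piFinSuccAbove μ 0).symm
    rw [← split.map_eq]
    have glue : ⇑(MeasurableEquiv.piFinSuccAbove E 0).symm = consEquiv :=
      funext fun x => Fin.insertNth_zero x.1 x.2
    rw [glue]
    exact ((hμ 0).prod (ih fun i => hμ i.succ)).map consEquiv.toLinearMap.toAffineMap
      (glue ▸ split.measurable)

lemma volume_real : SatisfiesPrekopaLeindler (volume : Measure ℝ) :=
  fun _ _ ha hb hab _ _ _ => lintegral_rpow_mul_lintegral_rpow_le ha hb hab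

lemma gaussianReal (m : ℝ) {v : ℝ≥0} (hv : v ≠ 0) :
    SatisfiesPrekopaLeindler (gaussianReal m v) := by
  rw [gaussianReal_of_var_ne_zero m hv]
  refine volume_real.withDensity (measurable_gaussianPDF m v) fun a b ha hb hab => ?_
  exact gaussianPDF_rpow_mul_rpow_le m v ha hb hab

section IsGaussian

variable {E : Type*} [MeasurableSpace E] [NormedAddCommGroup E] [BorelSpace E]

lemma stdGaussian [InnerProductSpace ℝ E] [FiniteDimensional ℝ E] :
    SatisfiesPrekopaLeindler (stdGaussian E) := by
  let T : (Fin (Module.finrank ℝ E) → ℝ) →ₗ[ℝ] E :=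
    Fintype.linearCombination ℝ (stdOrthonormalBasis ℝ E)
  exact (pi fun _ => gaussianReal 0 one_ne_zero).map T.toAffineMap
    T.continuous_of_finiteDimensional.measurable

open scoped MatrixOrder in
lemma multivariateGaussian {ι : Type*} [Fintype ι] [DecidableEq ι] (m : EuclideanSpace ℝ ι)
    (S : Matrix ι ι ℝ) : SatisfiesPrekopaLeindler (multivariateGaussian m S) := by
  let T := Matrix.toEuclideanCLM (𝕜 := ℝ) (CFC.sqrt S)
  exact stdGaussian.map (AffineMap.const ℝ _ m + T.toLinearMap.toAffineMap)
    (T.measurable.const_add m)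

end IsGaussian

end SatisfiesPrekopaLeindler

lemma exists_eq_multivariateGaussian {ι : Type*} [Fintype ι] [DecidableEq ι]
    (μ : Measure (EuclideanSpace ℝ ι)) [IsGaussian μ] :
    ∃ m S, μ = multivariateGaussian m S := by
  let b := (EuclideanSpace.basisFun ι ℝ).toBasis
  let B := (covarianceBilin μ).toBilinForm
  have posSemidef : (LinearMap.BilinForm.toMatrix b B).PosSemidef := by
    refine .of_dotProduct_mulVec_nonneg ?_ fun x => ?_
    · ext i j
      simp [B, LinearMap.BilinForm.toMatrix_apply, covarianceBilin_comm]
    · rw [star_trivial, LinearMap.BilinForm.dotProduct_toMatrix_mulVec]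
      exact covarianceBilin_self_nonneg _
  refine ⟨∫ x, x ∂μ, LinearMap.BilinForm.toMatrix b B, IsGaussian.ext (by simp) ?_⟩
  ext x y
  rw [covarianceBilin_multivariateGaussian posSemidef]
  exact LinearMap.BilinForm.apply_eq_dotProduct_toMatrix_mulVec b B x y

lemma SatisfiesPrekopaLeindler.of_isGaussian {E : Type*} [NormedAddCommGroup E] [NormedSpace ℝ E]
    [FiniteDimensional ℝ E] [MeasurableSpace E] [BorelSpace E] (μ : Measure E) [IsGaussian μ] :
    SatisfiesPrekopaLeindler μ := by
  let e : E ≃L[ℝ] EuclideanSpace ℝ (Fin (Module.finrank ℝ E)) := toEuclidean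
  obtain ⟨m, S, hμ⟩ := exists_eq_multivariateGaussian (μ.map e)
  have hμ_map : μ = (ProbabilityTheory.multivariateGaussian m S).map e.symm := by
    rw [← hμ, Measure.map_map e.symm.continuous.measurable e.continuous.measurable]
    simp
  rw [hμ_map]
  exact (multivariateGaussian m S).map e.symm.toLinearMap.toAffineMap e.symm.continuous.measurable

section MillsRatio

lemma hasDerivAt_gaussianPDFReal (m : ℝ) (v : ℝ≥0) (t : ℝ) :
    HasDerivAt (gaussianPDFReal m v) (-(t - m) / v * gaussianPDFReal m v t) t := by
  have exponent : HasDerivAt (fun t => -(t - m) ^ 2 / (2 * v)) (-(t - m) / v) t := by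
    refine ((((hasDerivAt_id t).sub_const m).pow 2).neg.div_const (2 * v : ℝ)).congr_deriv ?_
    simp only [id, Nat.cast_ofNat, Nat.add_one_sub_one, pow_one, mul_one]
    rw [← mul_neg, mul_div_mul_left _ _ two_ne_zero]
  rw [gaussianPDFReal_def]
  exact (exponent.exp.const_mul _).congr_deriv (by ring)

lemma gaussianPDFReal_le_gaussianPDFReal_mean (m : ℝ) (v : ℝ≥0) (t : ℝ) :
    gaussianPDFReal m v t ≤ gaussianPDFReal m v m := by
  rw [gaussianPDFReal, gaussianPDFReal]
  refine mul_le_mul_of_nonneg_left (Real.exp_le_exp.2 ?_) (by positivity)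
  exact div_le_div_of_nonneg_right (by simpa using sq_nonneg (t - m)) (by positivity)

lemma measureReal_Ioi_gaussianReal (m : ℝ) {v : ℝ≥0} (hv : v ≠ 0) (z : ℝ) :
    (gaussianReal m v).real (Ioi z) = ∫ t in Ioi z, gaussianPDFReal m v t := by
  rw [measureReal_def, gaussianReal_apply_eq_integral _ hv, ENNReal.toReal_ofReal]
  exact integral_nonneg fun t => gaussianPDFReal_nonneg m v t

lemma tendsto_mul_gaussianPDFReal_div_atTop (m : ℝ) (v : ℝ≥0) (s : ℝ) :
    Tendsto (fun t => v * gaussianPDFReal m v t / (s + (t - m))) atTop (𝓝 0) := by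
  have denom_atTop : Tendsto (fun t => s + (t - m)) atTop atTop :=
    tendsto_atTop_add_const_left _ _ (tendsto_atTop_add_const_right _ _ tendsto_id)
  refine squeeze_zero' ?_ ?_
    ((tendsto_const_nhds (x := v * gaussianPDFReal m v m)).div_atTop denom_atTop)
  all_goals
    filter_upwards [denom_atTop.eventually_gt_atTop 0] with t ht
  · exact div_nonneg (mul_nonneg v.2 (gaussianPDFReal_nonneg m v t)) ht.le
  · exact div_le_div_of_nonneg_right
      (mul_le_mul_of_nonneg_left (gaussianPDFReal_le_gaussianPDFReal_mean m v t) v.2) ht.le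

lemma le_setIntegral_Ioi_of_neg_deriv_le {p q q' : ℝ → ℝ} {z : ℝ}
    (hq : ∀ t ∈ Ici z, HasDerivAt q (q' t) t) (hq'_nonpos : ∀ t ∈ Ioi z, q' t ≤ 0)
    (hq_lim : Tendsto q atTop (𝓝 0)) (hp : IntegrableOn p (Ioi z))
    (hqp : ∀ t ∈ Ioi z, -q' t ≤ p t) : q z ≤ ∫ t in Ioi z, p t := by
  calc q z = ∫ t in Ioi z, -q' t := by
        rw [integral_neg, integral_Ioi_of_hasDerivAt_of_nonpos' hq hq'_nonpos hq_lim]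
        ring
    _ ≤ ∫ t in Ioi z, p t :=
        setIntegral_mono_on (integrableOn_Ioi_deriv_of_nonpos' hq hq'_nonpos hq_lim).neg hp
          measurableSet_Ioi hqp

-- The function `q` below vanishes at infinity, and its derivative `q'` satisfies `0 ≤ -q' ≤ p`.
lemma gaussianPDFReal_le_mul_measureReal_Ioi {m : ℝ} {v : ℝ≥0} (hv : v ≠ 0) {z : ℝ} (hz : m ≤ z) :
    gaussianPDFReal m v z ≤ (√v + (z - m)) / v * (gaussianReal m v).real (Ioi z) := by
  have hs : 0 < √(v : ℝ) := by positivity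
  have hv_sq : (v : ℝ) = √v * √v := (Real.mul_self_sqrt v.2).symm
  set s := √(v : ℝ)
  set p := gaussianPDFReal m v
  have p_nonneg : ∀ t, 0 ≤ p t := gaussianPDFReal_nonneg m v
  let q : ℝ → ℝ := fun t => v * p t / (s + (t - m))
  let q' : ℝ → ℝ := fun t => -(p t * (((t - m) * (s + (t - m)) + v) / (s + (t - m)) ^ 2))
  have hasDerivAt_q : ∀ t ∈ Ici z, HasDerivAt q (q' t) t := by
    intro t ht
    have denom_pos : 0 < s + (t - m) := by linarith [mem_Ici.1 ht]
    refine (((hasDerivAt_gaussianPDFReal m v t).const_mul (v : ℝ)).div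
      (((hasDerivAt_id t).sub_const m).const_add s) denom_pos.ne').congr_deriv ?_
    simp only [q', p, id]
    field_simp
    ring
  have q'_nonpos : ∀ t ∈ Ioi z, q' t ≤ 0 := by
    intro t ht
    have : 0 ≤ t - m := by linarith [mem_Ioi.1 ht]
    have := p_nonneg t
    exact neg_nonpos.2 (by positivity)
  have neg_q'_le : ∀ t ∈ Ioi z, -q' t ≤ p t := by
    intro t ht
    have : 0 ≤ t - m := by linarith [mem_Ioi.1 ht]
    rw [neg_neg]
    refine mul_le_of_le_one_right (p_nonneg t) ((div_le_one (by positivity)).2 ?_)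
    nlinarith
  have tail_ge : q z ≤ ∫ t in Ioi z, p t :=
    le_setIntegral_Ioi_of_neg_deriv_le hasDerivAt_q q'_nonpos
      (tendsto_mul_gaussianPDFReal_div_atTop m v s) (integrable_gaussianPDFReal m v).integrableOn
      neg_q'_le
  have denom_pos : 0 < s + (z - m) := by linarith
  calc p z = (s + (z - m)) / v * q z := by simp only [q]; field_simp
    _ ≤ (s + (z - m)) / v * (gaussianReal m v).real (Ioi z) := by
      rw [measureReal_Ioi_gaussianReal m hv]
      exact mul_le_mul_of_nonneg_left tail_ge (by positivity)

/-- The bound on the hazard rate (density over upper tail) at `z` of a Gaussian variable with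
standard deviation `σ` and nonnegative mean. -/
noncomputable def gaussianHazardBound (σ z : ℝ) : ℝ := 2 / σ * max (z / σ) 1

lemma gaussianHazardBound_nonneg {σ : ℝ} (hσ : 0 < σ) (z : ℝ) : 0 ≤ gaussianHazardBound σ z := by
  unfold gaussianHazardBound
  positivity

lemma monotone_gaussianHazardBound {σ : ℝ} (hσ : 0 < σ) : Monotone (gaussianHazardBound σ) := by
  intro y z hyz
  unfold gaussianHazardBound
  gcongr

lemma continuous_gaussianHazardBound (σ : ℝ) : Continuous (gaussianHazardBound σ) := by
  unfold gaussianHazardBound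
  fun_prop

lemma gaussianPDFReal_le_gaussianHazardBound_mul {m : ℝ} (hm : 0 ≤ m) {v : ℝ≥0} (hv : v ≠ 0)
    (z : ℝ) :
    gaussianPDFReal m v z ≤ gaussianHazardBound √v z * (gaussianReal m v).real (Ioi z) := by
  have hs : 0 < √(v : ℝ) := by positivity
  have hv_sq : (v : ℝ) = √v * √v := (Real.mul_self_sqrt v.2).symm
  rcases le_total m z with hz | hz
  · refine (gaussianPDFReal_le_mul_measureReal_Ioi hv hz).trans
      (mul_le_mul_of_nonneg_right ?_ measureReal_nonneg)
    calc (√v + (z - m)) / v ≤ (√v + z) / (√v * √v) := by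
          rw [← hv_sq]
          gcongr
          linarith
      _ = 1 / √v * (z / √v + 1) := by field_simp; ring
      _ ≤ 1 / √v * (2 * max (z / √v) 1) := by
          gcongr
          linarith [le_max_left (z / √v) 1, le_max_right (z / √v) 1]
      _ = gaussianHazardBound √v z := by rw [gaussianHazardBound]; ring
  · calc gaussianPDFReal m v z ≤ gaussianPDFReal m v m :=
          gaussianPDFReal_le_gaussianPDFReal_mean m v z
      _ ≤ (√v + (m - m)) / v * (gaussianReal m v).real (Ioi m) :=
          gaussianPDFReal_le_mul_measureReal_Ioi hv le_rfl
      _ = 1 / √v * (gaussianReal m v).real (Ioi m) := by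
          rw [sub_self, add_zero]
          congr 1
          nth_rw 2 [hv_sq]
          field_simp
      _ ≤ gaussianHazardBound √v z * (gaussianReal m v).real (Ioi z) := by
          refine mul_le_mul ?_ (measureReal_mono (Ioi_subset_Ioi hz)) measureReal_nonneg
            (gaussianHazardBound_nonneg hs z)
          calc 1 / √(v : ℝ) ≤ 2 / √v * 1 := by rw [mul_one]; gcongr; norm_num
            _ ≤ gaussianHazardBound √v z :=
              mul_le_mul_of_nonneg_left (le_max_right _ _) (by positivity)

end MillsRatio

section FirstArgmax

variable {ι : Type*} [LinearOrder ι]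

/-- The set of vectors whose largest coordinate is attained at `j` and at no earlier index. For `ι`
finite and nonempty these sets, for varying `j`, partition `ι → ℝ`. -/
def firstArgmax (j : ι) : Set (ι → ℝ) := {z | (∀ i, z i ≤ z j) ∧ ∀ i < j, z i < z j}

lemma add_mem_firstArgmax {j : ι} {z w : ι → ℝ} (hz : z ∈ firstArgmax j) (hw : ∀ i, w i ≤ w j) :
    z + w ∈ firstArgmax j :=
  ⟨fun i => add_le_add (hz.1 i) (hw i), fun i hi => add_lt_add_of_lt_of_le (hz.2 i hi) (hw i)⟩

lemma pairwise_disjoint_firstArgmax :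
    Pairwise (Function.onFun Disjoint (firstArgmax : ι → Set (ι → ℝ))) := by
  intro i j hij
  refine disjoint_left.2 fun z hi hj => ?_
  rcases hij.lt_or_gt with h | h
  · exact (hi.1 j).not_gt (hj.2 i h)
  · exact (hj.1 i).not_gt (hi.2 j h)

lemma iSup_eq_of_mem_firstArgmax {j : ι} {z : ι → ℝ} (hz : z ∈ firstArgmax j) :
    ⨆ i, z i = z j :=
  IsGreatest.csSup_eq ⟨mem_range_self j, forall_mem_range.2 hz.1⟩

lemma exists_mem_firstArgmax [Finite ι] [Nonempty ι] (z : ι → ℝ) : ∃ j, z ∈ firstArgmax j := by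
  obtain ⟨j, hj, hj_min⟩ :=
    exists_minimal_of_wellFoundedLT (fun j => ∀ i, z i ≤ z j) (Finite.exists_max z)
  refine ⟨j, hj, fun i hij => (hj i).lt_of_not_ge fun hji => ?_⟩
  exact hij.not_ge (hj_min (fun k => (hj k).trans hji) hij.le)

lemma measurableSet_firstArgmax [Countable ι] (j : ι) : MeasurableSet (firstArgmax j) := by
  simp only [firstArgmax, measurableSet_setOfPred]
  fun_prop

lemma measure_iSup_mem_eq_sum [Fintype ι] [Nonempty ι] (μ : Measure (ι → ℝ)) {B : Set ℝ}
    (hB : MeasurableSet B) :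
    μ {z | ⨆ i, z i ∈ B} = ∑ j, μ (firstArgmax j ∩ {z | z j ∈ B}) := by
  have partition : {z : ι → ℝ | ⨆ i, z i ∈ B} = ⋃ j, firstArgmax j ∩ {z | z j ∈ B} := by
    ext z
    simp only [mem_iUnion, mem_inter_iff, mem_ofPred_eq]
    refine ⟨fun hz => ?_, fun ⟨j, hj, hz⟩ => (iSup_eq_of_mem_firstArgmax hj).symm ▸ hz⟩
    obtain ⟨j, hj⟩ := exists_mem_firstArgmax z
    exact ⟨j, hj, iSup_eq_of_mem_firstArgmax hj ▸ hz⟩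
  rw [partition, measure_iUnion, tsum_fintype]
  · exact fun i j hij =>
      (pairwise_disjoint_firstArgmax hij).mono inter_subset_left inter_subset_left
  · exact fun j => (measurableSet_firstArgmax j).inter (measurable_pi_apply j hB)

end FirstArgmax

section HazardRate

lemma withDensity_inter_Ioc_le_of_isUpperSet {f : ℝ → ℝ≥0∞} {c : ℝ≥0∞} {x y : ℝ}
    (hf : ∀ z ≤ y, f z ≤ c * volume.withDensity f (Ioi z)) {U : Set ℝ} (hU : IsUpperSet U) :
    volume.withDensity f (U ∩ Ioc x y) ≤
      c * ENNReal.ofReal (y - x) * volume.withDensity f (U ∩ Ioi x) := by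
  have hU_meas : MeasurableSet U := hU.ordConnected.measurableSet
  have density_le : ∀ z ∈ U ∩ Ioc x y, f z ≤ c * volume.withDensity f (U ∩ Ioi x) :=
    fun z ⟨hzU, hxz, hzy⟩ => (hf z hzy).trans <| by
      gcongr
      exact fun t hzt => ⟨hU (mem_Ioi.1 hzt).le hzU, hxz.trans hzt⟩
  calc volume.withDensity f (U ∩ Ioc x y) = ∫⁻ z in U ∩ Ioc x y, f z :=
        withDensity_apply _ (hU_meas.inter measurableSet_Ioc)
    _ ≤ c * volume.withDensity f (U ∩ Ioi x) * volume (U ∩ Ioc x y) := by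
        rw [← setLIntegral_const]
        exact setLIntegral_mono' (hU_meas.inter measurableSet_Ioc) density_le
    _ ≤ c * volume.withDensity f (U ∩ Ioi x) * ENNReal.ofReal (y - x) := by
        rw [← Real.volume_Ioc]
        gcongr
        exact inter_subset_right
    _ = c * ENNReal.ofReal (y - x) * volume.withDensity f (U ∩ Ioi x) := by ring

lemma gaussianReal_inter_Ioc_le_of_isUpperSet {m : ℝ} (hm : 0 ≤ m) {v : ℝ≥0} (hv : v ≠ 0)
    (x y : ℝ) {U : Set ℝ} (hU : IsUpperSet U) :
    gaussianReal m v (U ∩ Ioc x y) ≤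
      ENNReal.ofReal (gaussianHazardBound √v y) * ENNReal.ofReal (y - x) *
        gaussianReal m v (U ∩ Ioi x) := by
  have hs : 0 < √(v : ℝ) := by positivity
  have hazard : ∀ z ≤ y, gaussianPDF m v z ≤
      ENNReal.ofReal (gaussianHazardBound √v y) * gaussianReal m v (Ioi z) := by
    intro z hz
    rw [gaussianPDF, ← ofReal_measureReal, ← ENNReal.ofReal_mul (gaussianHazardBound_nonneg hs y)]
    exact ENNReal.ofReal_le_ofReal <| (gaussianPDFReal_le_gaussianHazardBound_mul hm hv z).trans <|
      mul_le_mul_of_nonneg_right (monotone_gaussianHazardBound hs hz) measureReal_nonneg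
  rw [gaussianReal_of_var_ne_zero m hv] at hazard ⊢
  exact withDensity_inter_Ioc_le_of_isUpperSet hazard hU

-- Conditionally on the residual `z - X z • ρ`, the event `A` is an upper set of values of `X`.
lemma measure_inter_preimage_Ioc_le_of_indepFun {E : Type*} [AddCommGroup E] [Module ℝ E]
    [MeasurableSpace E] [MeasurableAdd₂ E] [MeasurableSub₂ E] [MeasurableSMul₂ ℝ E]
    {μ : Measure E} [IsFiniteMeasure μ] {X : E → ℝ} (hX : Measurable X) {ρ : E}
    (hindep : IndepFun (fun z => z - X z • ρ) X μ) {c : ℝ≥0∞} (hc : c ≠ ∞) {x y : ℝ}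
    (hlaw : ∀ U : Set ℝ, IsUpperSet U → μ.map X (U ∩ Ioc x y) ≤ c * μ.map X (U ∩ Ioi x))
    {A : Set E} (hA : MeasurableSet A) (hAρ : ∀ z ∈ A, ∀ t : ℝ, 0 ≤ t → z + t • ρ ∈ A) :
    μ (A ∩ X ⁻¹' Ioc x y) ≤ c * μ (A ∩ X ⁻¹' Ioi x) := by
  let W : E → E := fun z => z - X z • ρ
  let slice : E → Set ℝ := fun w => {t | w + t • ρ ∈ A}
  have hW : Measurable W := measurable_id.sub (hX.smul_const ρ)
  have isUpperSet_slice : ∀ w, IsUpperSet (slice w) := by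
    intro w s t hst hs
    have := hAρ _ hs (t - s) (sub_nonneg.2 hst)
    rwa [add_assoc, ← add_smul, add_sub_cancel] at this
  have measure_inter : ∀ B : Set ℝ, MeasurableSet B →
      μ (A ∩ X ⁻¹' B) = ∫⁻ w, μ.map X (slice w ∩ B) ∂μ.map W := by
    intro B hB
    have hAB : MeasurableSet {p : E × ℝ | p.1 + p.2 • ρ ∈ A ∧ p.2 ∈ B} :=
      (hA.preimage (measurable_fst.add (measurable_snd.smul_const ρ))).inter (measurable_snd hB)
    calc μ (A ∩ X ⁻¹' B) = μ.map (fun z => (W z, X z)) {p | p.1 + p.2 • ρ ∈ A ∧ p.2 ∈ B} := by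
          rw [Measure.map_apply (hW.prodMk hX) hAB]
          congr 1
          ext z
          simp [W]
      _ = ((μ.map W).prod (μ.map X)) {p | p.1 + p.2 • ρ ∈ A ∧ p.2 ∈ B} := by
          rw [(indepFun_iff_map_prod_eq_prod_map_map hW.aemeasurable hX.aemeasurable).1 hindep]
      _ = ∫⁻ w, μ.map X (slice w ∩ B) ∂μ.map W := Measure.prod_apply hAB
  rw [measure_inter _ measurableSet_Ioc, measure_inter _ measurableSet_Ioi,
    ← lintegral_const_mul' _ _ hc]
  exact lintegral_mono fun w => hlaw _ (isUpperSet_slice w)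

variable {ι : Type*} {μ : Measure (ι → ℝ)} [IsGaussian μ]

lemma hasGaussianLaw_eval (i : ι) : HasGaussianLaw (fun z : ι → ℝ => z i) μ :=
  HasGaussianLaw.eval (X := fun i (z : ι → ℝ) => z i) IsGaussian.hasGaussianLaw_id i

/-- The coefficients of the linear regression of the coordinates on the coordinate `j` under the
law `μ`. -/
noncomputable def regressionCoeff (μ : Measure (ι → ℝ)) (j : ι) : ι → ℝ :=
  fun i => cov[fun z => z i, fun z => z j; μ] / Var[fun z => z j; μ]

lemma regressionCoeff_le_regressionCoeff_self {v : ℝ} (hv : v ≠ 0)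
    (hvar : ∀ i, Var[fun z => z i; μ] = v) (i j : ι) :
    regressionCoeff μ j i ≤ regressionCoeff μ j j := by
  have variance_sub_nonneg := variance_nonneg (fun z : ι → ℝ => z i - z j) μ
  rw [variance_fun_sub (hasGaussianLaw_eval i).memLp_two (hasGaussianLaw_eval j).memLp_two,
    hvar, hvar] at variance_sub_nonneg
  have v_nonneg : 0 ≤ v := hvar i ▸ variance_nonneg _ μ
  rw [regressionCoeff, regressionCoeff, covariance_self (measurable_pi_apply j).aemeasurable, hvar]
  gcongr
  linarith

variable [Finite ι]

lemma indepFun_regression_residual {j : ι} (hj : Var[fun z => z j; μ] ≠ 0) :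
    IndepFun (fun z => z - z j • regressionCoeff μ j) (fun z => z j) μ := by
  have := Fintype.ofFinite ι
  let L : (ι → ℝ) →L[ℝ] (ι → ℝ) × (Unit → ℝ) :=
    (ContinuousLinearMap.id ℝ _ -
      (ContinuousLinearMap.proj j).smulRight (regressionCoeff μ j)).prod
      (ContinuousLinearMap.pi fun _ => ContinuousLinearMap.proj j)
  have joint : HasGaussianLaw
      (fun z => (fun i => z i - z j * regressionCoeff μ j i, fun _ : Unit => z j)) μ :=
    IsGaussian.hasGaussianLaw_id.map_fun L
  have memLp_two (i : ι) : MemLp (fun z => z i) 2 μ := (hasGaussianLaw_eval i).memLp_two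
  have uncorrelated (i : ι) :
      cov[fun z => z i - z j * regressionCoeff μ j i, fun z => z j; μ] = 0 := by
    rw [covariance_fun_sub_left (memLp_two i) ((memLp_two j).mul_const _) (memLp_two j),
      covariance_mul_const_left, covariance_self (measurable_pi_apply j).aemeasurable,
      regressionCoeff, mul_div_cancel₀ _ hj, sub_self]
  have indep := joint.indepFun_of_covariance_eval
    (X := fun i (z : ι → ℝ) => z i - z j * regressionCoeff μ j i) (Y := fun _ (z : ι → ℝ) => z j)
    fun i _ => uncorrelated i
  exact indep.comp (φ := id) (ψ := fun u : Unit → ℝ => u ()) measurable_id (by fun_prop)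

lemma measure_inter_eval_Ioc_le {σ : ℝ} (hσ : 0 < σ) (hmean : ∀ i, 0 ≤ ∫ z, z i ∂μ)
    (hvar : ∀ i, Var[fun z => z i; μ] = σ ^ 2) {j : ι} {A : Set (ι → ℝ)} (hA : MeasurableSet A)
    (hAj : ∀ z ∈ A, ∀ w, (∀ i, w i ≤ w j) → z + w ∈ A) (x y : ℝ) :
    μ (A ∩ {z | z j ∈ Ioc x y}) ≤
      ENNReal.ofReal (gaussianHazardBound σ y) * ENNReal.ofReal (y - x) *
        μ (A ∩ {z | z j ∈ Ioi x}) := by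
  have hσ_sq : σ ^ 2 ≠ 0 := by positivity
  refine measure_inter_preimage_Ioc_le_of_indepFun (measurable_pi_apply j)
    (indepFun_regression_residual ((hvar j).trans_ne hσ_sq)) (by finiteness) (fun U hU => ?_) hA
    fun z hz t ht => hAj z hz _ fun i => ?_
  · have law : μ.map (fun z => z j) = gaussianReal (∫ z, z j ∂μ) (σ ^ 2).toNNReal := by
      rw [(hasGaussianLaw_eval j).map_eq_gaussianReal, hvar]
    have sqrt_var : √((σ ^ 2).toNNReal : ℝ) = σ := by
      rw [Real.coe_toNNReal _ (sq_nonneg σ), Real.sqrt_sq hσ.le]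
    have := gaussianReal_inter_Ioc_le_of_isUpperSet (hmean j)
      (Real.toNNReal_pos.2 (by positivity : 0 < σ ^ 2)).ne' x y hU
    rwa [sqrt_var, ← law] at this
  · exact mul_le_mul_of_nonneg_left (regressionCoeff_le_regressionCoeff_self hσ_sq hvar i j) ht

lemma measure_iSup_mem_Ioc_le [Nonempty ι] {σ : ℝ} (hσ : 0 < σ) (hmean : ∀ i, 0 ≤ ∫ z, z i ∂μ)
    (hvar : ∀ i, Var[fun z => z i; μ] = σ ^ 2) (x y : ℝ) :
    μ {z | ⨆ i, z i ∈ Ioc x y} ≤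
      ENNReal.ofReal (gaussianHazardBound σ y) * ENNReal.ofReal (y - x) *
        μ {z | ⨆ i, z i ∈ Ioi x} := by
  have := Fintype.ofFinite ι
  let := IsWellOrder.linearOrder (WellOrderingRel (α := ι))
  rw [measure_iSup_mem_eq_sum μ measurableSet_Ioc, measure_iSup_mem_eq_sum μ measurableSet_Ioi,
    Finset.mul_sum]
  exact Finset.sum_le_sum fun j _ => measure_inter_eval_Ioc_le hσ hmean hvar
    (measurableSet_firstArgmax j) (fun z hz w hw => add_mem_firstArgmax hz hw) x y

end HazardRate

section LogConcaveIncrements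

variable {F : ℝ → ℝ}

lemma mul_le_mul_of_rpow_mul_rpow_le (hF : ∀ x, 0 ≤ F x)
    (hlog : ∀ x y a b : ℝ, 0 < a → 0 < b → a + b = 1 → F x ^ a * F y ^ b ≤ F (a * x + b * y))
    {x y h : ℝ} (hxy : x ≤ y) (hh : 0 ≤ h) : F (y + h) * F x ≤ F y * F (x + h) := by
  rcases hxy.eq_or_lt with rfl | hxy
  · exact (mul_comm _ _).le
  rcases hh.eq_or_lt with rfl | hh
  · simp only [add_zero, le_refl]
  -- `x + h = b x + a (y + h)` and `y = a x + b (y + h)`.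
  set a := h / (h + (y - x))
  set b := (y - x) / (h + (y - x))
  have : 0 < y - x := sub_pos.2 hxy
  have ha : 0 < a := by positivity
  have hb : 0 < b := by positivity
  have hab : a + b = 1 := by rw [← add_div, div_self (by positivity)]
  have le_left : F x ^ b * F (y + h) ^ a ≤ F (x + h) := by
    convert hlog x (y + h) b a hb ha (by rw [add_comm, hab]) using 2
    simp only [a, b]
    field_simp
    ring
  have le_right : F x ^ a * F (y + h) ^ b ≤ F y := by
    convert hlog x (y + h) a b ha hb hab using 2
    simp only [a, b]
    field_simp
    ring
  have rpow_mul_rpow (s : ℝ) : F s ^ a * F s ^ b = F s := by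
    rw [← Real.rpow_add_of_nonneg (hF s) ha.le hb.le, hab, Real.rpow_one]
  calc F (y + h) * F x = (F x ^ a * F (y + h) ^ b) * (F x ^ b * F (y + h) ^ a) := by
        conv_lhs => rw [← rpow_mul_rpow x, ← rpow_mul_rpow (y + h)]
        ring
    _ ≤ F y * F (x + h) := mul_le_mul le_right le_left
        (mul_nonneg (Real.rpow_nonneg (hF _) _) (Real.rpow_nonneg (hF _) _)) (hF y)

lemma sub_le_of_hazard_of_median (hF : ∀ x, F x ∈ Icc 0 1)
    (hcross : ∀ x y h, x ≤ y → 0 ≤ h → F (y + h) * F x ≤ F y * F (x + h))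
    {κ : ℝ → ℝ} (hκ : ∀ z, 0 ≤ κ z) (hκ_mono : Monotone κ)
    (hhazard : ∀ x y, x ≤ y → F y - F x ≤ κ y * (y - x) * (1 - F x))
    {m : ℝ} (hm : 1 / 2 ≤ F m) {x y : ℝ} (hxy : x ≤ y) :
    F y - F x ≤ κ (m + (y - x)) * (y - x) := by
  have hyx : 0 ≤ y - x := sub_nonneg.2 hxy
  rcases le_total x m with hxm | hmx
  · calc F y - F x ≤ κ y * (y - x) * (1 - F x) := hhazard x y hxy
      _ ≤ κ y * (y - x) :=
        mul_le_of_le_one_right (mul_nonneg (hκ y) hyx) (by linarith [(hF x).1])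
      _ ≤ κ (m + (y - x)) * (y - x) := by
        gcongr
        exact hκ_mono (by linarith)
  -- `(F (z + h) - F z) / F z` is antitone in `z`, so compare the increment at `x` with that at `m`.
  · have bound_nonneg : 0 ≤ κ (m + (y - x)) * (y - x) := mul_nonneg (hκ _) hyx
    refine le_of_mul_le_mul_right ?_ (lt_of_lt_of_le one_half_pos hm)
    calc (F y - F x) * F m ≤ F x * (F (m + (y - x)) - F m) := by
          have := hcross m x (y - x) hmx hyx
          rw [add_sub_cancel] at this
          linarith
      _ ≤ F x * (κ (m + (y - x)) * (y - x) * (1 - F m)) := by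
          have := hhazard m (m + (y - x)) (by linarith)
          rw [add_sub_cancel_left] at this
          exact mul_le_mul_of_nonneg_left this (hF x).1
      _ ≤ κ (m + (y - x)) * (y - x) * (1 - F m) :=
          mul_le_of_le_one_left (mul_nonneg bound_nonneg (by linarith [(hF m).2])) (hF x).2
      _ ≤ κ (m + (y - x)) * (y - x) * F m :=
          mul_le_mul_of_nonneg_left (by linarith) bound_nonneg

lemma sub_le_mul_of_sub_le_modulus_mul {ω : ℝ → ℝ} (hω : ContinuousAt ω 0)
    (hF : ∀ x y, x ≤ y → F y - F x ≤ ω (y - x) * (y - x)) {x y : ℝ} (hxy : x ≤ y) :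
    F y - F x ≤ ω 0 * (y - x) := by
  have subdivide (n : ℕ) : F y - F x ≤ ω ((y - x) / (n + 1)) * (y - x) := by
    set h := (y - x) / (n + 1)
    have hh : 0 ≤ h := div_nonneg (sub_nonneg.2 hxy) (by positivity)
    have nsteps : ((n + 1 : ℕ) : ℝ) * h = y - x := by simp only [h]; push_cast; field_simp
    calc F y - F x = F (x + (n + 1 : ℕ) * h) - F (x + (0 : ℕ) * h) := by
          rw [nsteps, Nat.cast_zero, zero_mul, add_zero, add_sub_cancel]
      _ = ∑ i ∈ Finset.range (n + 1), (F (x + (i + 1 : ℕ) * h) - F (x + i * h)) :=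
          (Finset.sum_range_sub (fun i : ℕ => F (x + i * h)) _).symm
      _ ≤ ∑ _i ∈ Finset.range (n + 1), ω h * h := by
          refine Finset.sum_le_sum fun i _ => ?_
          have step : x + (i + 1 : ℕ) * h - (x + i * h) = h := by push_cast; ring
          have := hF (x + i * h) (x + (i + 1 : ℕ) * h) (by linarith)
          rwa [step] at this
      _ = ω h * (y - x) := by
          rw [Finset.sum_const, Finset.card_range, nsmul_eq_mul, ← nsteps]
          ring
  have mesh : Tendsto (fun n : ℕ => (y - x) / ((n : ℝ) + 1)) atTop (𝓝 0) :=
    tendsto_const_nhds.div_atTop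
      (tendsto_atTop_add_const_right _ _ tendsto_natCast_atTop_atTop)
  exact ge_of_tendsto' ((hω.tendsto.comp mesh).mul_const _) subdivide

lemma sub_le_mul_of_hazard_of_median (hF : ∀ x, F x ∈ Icc 0 1)
    (hlog : ∀ x y a b : ℝ, 0 < a → 0 < b → a + b = 1 → F x ^ a * F y ^ b ≤ F (a * x + b * y))
    {κ : ℝ → ℝ} (hκ : ∀ z, 0 ≤ κ z) (hκ_mono : Monotone κ) {m : ℝ} (hκm : ContinuousAt κ m)
    (hhazard : ∀ x y, x ≤ y → F y - F x ≤ κ y * (y - x) * (1 - F x)) (hm : 1 / 2 ≤ F m)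
    {x y : ℝ} (hxy : x ≤ y) : F y - F x ≤ κ m * (y - x) := by
  have hcross := fun x y h => mul_le_mul_of_rpow_mul_rpow_le (x := x) (y := y) (h := h)
    (fun x => (hF x).1) hlog
  have continuousAt_shift : ContinuousAt (fun h => κ (m + h)) 0 :=
    ContinuousAt.comp (by rwa [add_zero]) (by fun_prop)
  have := sub_le_mul_of_sub_le_modulus_mul continuousAt_shift
    (fun x y => sub_le_of_hazard_of_median hF hcross hκ hκ_mono hhazard hm) hxy
  rwa [add_zero] at this

end LogConcaveIncrements

section BoundedDensity

-- `C x - cdf ν x` is the distribution function of the complementary measure.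
lemma le_smul_volume_of_cdf_sub_le {ν : Measure ℝ} [IsProbabilityMeasure ν] {C : ℝ}
    (hν : ∀ x y, x ≤ y → cdf ν y - cdf ν x ≤ C * (y - x)) :
    ν ≤ ENNReal.ofReal C • volume := by
  have hC : 0 ≤ C := by linarith [monotone_cdf ν zero_le_one, hν 0 1 zero_le_one]
  let G : StieltjesFunction ℝ :=
    { toFun := fun x => C * x - cdf ν x
      mono' := fun x y hxy => by linarith [hν x y hxy]
      right_continuous' := fun x =>
        (continuous_const_mul C).continuousWithinAt.sub ((cdf ν).right_continuous x) }
  have complement : G.measure + ν = ENNReal.ofReal C • volume := by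
    rw [← measure_cdf ν, ← StieltjesFunction.measure_add]
    refine Measure.ext_of_Ioc _ _ fun a b _ => ?_
    rw [StieltjesFunction.measure_Ioc, Measure.smul_apply, Real.volume_Ioc, smul_eq_mul,
      ← ENNReal.ofReal_mul hC, StieltjesFunction.add_apply, StieltjesFunction.add_apply]
    congr 1
    change C * b - cdf ν b + cdf ν b - (C * a - cdf ν a + cdf ν a) = _
    ring
  exact complement ▸ Measure.le_add_left le_rfl

lemma exists_bounded_density_of_le_smul {α : Type*} [MeasurableSpace α] {μ ν : Measure α}
    [SigmaFinite μ] [ν.HaveLebesgueDecomposition μ] {C : ℝ} (hC : 0 ≤ C)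
    (hν : ν ≤ ENNReal.ofReal C • μ) :
    ∃ f : α → ℝ, Measurable f ∧ (∀ x, 0 ≤ f x) ∧
      ν = μ.withDensity (fun x => ENNReal.ofReal (f x)) ∧ ∀ x, f x ≤ C := by
  have withDensity_rnDeriv : μ.withDensity (ν.rnDeriv μ) = ν :=
    Measure.withDensity_rnDeriv_eq ν μ (Measure.absolutelyContinuous_of_le_smul hν)
  have rnDeriv_le : ν.rnDeriv μ ≤ᵐ[μ] fun _ => ENNReal.ofReal C := by
    refine ae_le_of_forall_setLIntegral_le_of_sigmaFinite (Measure.measurable_rnDeriv _ _)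
      fun s hs _ => ?_
    rw [← withDensity_apply _ hs, withDensity_rnDeriv, setLIntegral_const]
    exact hν s
  refine ⟨fun x => min (ν.rnDeriv μ x).toReal C,
    (Measure.measurable_rnDeriv _ _).ennreal_toReal.min measurable_const,
    fun x => le_min ENNReal.toReal_nonneg hC, ?_, fun x => min_le_right _ _⟩
  conv_lhs => rw [← withDensity_rnDeriv]
  refine withDensity_congr_ae ?_
  filter_upwards [rnDeriv_le] with x hx
  rw [min_eq_left (ENNReal.toReal_le_of_le_ofReal hC hx),
    ENNReal.ofReal_toReal (ne_top_of_le_ne_top ENNReal.ofReal_ne_top hx)]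

end BoundedDensity

section GaussianMaximum

lemma cdf_sub_cdf (ν : Measure ℝ) [IsProbabilityMeasure ν] {x y : ℝ} (hxy : x ≤ y) :
    cdf ν y - cdf ν x = ν.real (Ioc x y) := by
  rw [measureReal_def, ← measure_cdf ν, StieltjesFunction.measure_Ioc, measure_cdf,
    ENNReal.toReal_ofReal (sub_nonneg.2 (monotone_cdf ν hxy))]

lemma one_sub_cdf (ν : Measure ℝ) [IsProbabilityMeasure ν] (x : ℝ) :
    1 - cdf ν x = ν.real (Ioi x) := by
  rw [cdf_eq_real, ← compl_Iic, probReal_compl_eq_one_sub measurableSet_Iic]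

variable {ι : Type*} [Finite ι]

lemma measurable_iSup_eval : Measurable fun z : ι → ℝ => ⨆ i, z i :=
  .iSup measurable_pi_apply

variable {μ : Measure (ι → ℝ)} [IsGaussian μ]

instance isProbabilityMeasure_map_iSup : IsProbabilityMeasure (μ.map fun z => ⨆ i, z i) :=
  Measure.isProbabilityMeasure_map measurable_iSup_eval.aemeasurable

variable [Nonempty ι]

lemma cdf_map_iSup_rpow_mul_rpow_le (x y : ℝ) {a b : ℝ} (ha : 0 < a) (hb : 0 < b)
    (hab : a + b = 1) :
    cdf (μ.map fun z => ⨆ i, z i) x ^ a * cdf (μ.map fun z => ⨆ i, z i) y ^ b ≤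
      cdf (μ.map fun z => ⨆ i, z i) (a * x + b * y) := by
  have := Fintype.ofFinite ι
  have measurableSet_le (s : ℝ) : MeasurableSet {z : ι → ℝ | ⨆ i, z i ≤ s} :=
    measurable_iSup_eval measurableSet_Iic
  have cdf_eq (s : ℝ) : cdf (μ.map fun z => ⨆ i, z i) s = (μ {z | ⨆ i, z i ≤ s}).toReal := by
    rw [cdf_eq_real, map_measureReal_apply measurable_iSup_eval measurableSet_Iic]
    rfl
  have combination_le : ∀ z ∈ {z : ι → ℝ | ⨆ i, z i ≤ x}, ∀ w ∈ {w : ι → ℝ | ⨆ i, w i ≤ y},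
      a • z + b • w ∈ {z | ⨆ i, z i ≤ a * x + b * y} := fun z hz w hw => ciSup_le fun i =>
    add_le_add (mul_le_mul_of_nonneg_left ((Finite.le_ciSup z i).trans hz) ha.le)
      (mul_le_mul_of_nonneg_left ((Finite.le_ciSup w i).trans hw) hb.le)
  rw [cdf_eq, cdf_eq, cdf_eq, ENNReal.toReal_rpow, ENNReal.toReal_rpow, ← ENNReal.toReal_mul]
  exact ENNReal.toReal_mono (measure_ne_top _ _) <|
    (SatisfiesPrekopaLeindler.of_isGaussian μ).measure_rpow_mul_le ha hb hab
      (measurableSet_le x) (measurableSet_le y) (measurableSet_le _) combination_le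

lemma cdf_map_iSup_sub_le_of_median {σ : ℝ} (hσ : 0 < σ) (hmean : ∀ i, 0 ≤ ∫ z, z i ∂μ)
    (hvar : ∀ i, Var[fun z => z i; μ] = σ ^ 2) {m : ℝ}
    (hm : 1 / 2 ≤ cdf (μ.map fun z => ⨆ i, z i) m) {x y : ℝ} (hxy : x ≤ y) :
    cdf (μ.map fun z => ⨆ i, z i) y - cdf (μ.map fun z => ⨆ i, z i) x ≤
      gaussianHazardBound σ m * (y - x) := by
  refine sub_le_mul_of_hazard_of_median (fun x => ⟨cdf_nonneg _ x, cdf_le_one _ x⟩)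
    (fun x y a b => cdf_map_iSup_rpow_mul_rpow_le x y) (gaussianHazardBound_nonneg hσ)
    (monotone_gaussianHazardBound hσ) (continuous_gaussianHazardBound σ).continuousAt
    (fun x y hxy => ?_) hm hxy
  rw [cdf_sub_cdf _ hxy, one_sub_cdf, map_measureReal_apply measurable_iSup_eval measurableSet_Ioc,
    map_measureReal_apply measurable_iSup_eval measurableSet_Ioi]
  have hazard := ENNReal.toReal_mono (by finiteness) (measure_iSup_mem_Ioc_le hσ hmean hvar x y)
  rwa [ENNReal.toReal_mul, ENNReal.toReal_mul,
    ENNReal.toReal_ofReal (gaussianHazardBound_nonneg hσ y),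
    ENNReal.toReal_ofReal (sub_nonneg.2 hxy)] at hazard

theorem stmt_10_general {Ω : Type*} [MeasurableSpace Ω] {P : Measure Ω} {Z : Ω → ι → ℝ}
    (hZ : HasGaussianLaw Z P) {σ : ℝ} (hσ : 0 < σ) (hmean : ∀ j, 0 ≤ ∫ ω, Z ω j ∂P)
    (hvar : ∀ j, Var[fun ω => Z ω j; P] = σ ^ 2) {m : ℝ}
    (hm : (1 : ℝ≥0∞) / 2 ≤ P {ω | (⨆ j, Z ω j) ≤ m}) :
    ∃ f : ℝ → ℝ, Measurable f ∧ (∀ x, 0 ≤ f x) ∧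
      P.map (fun ω => ⨆ j, Z ω j) = volume.withDensity (fun x => ENNReal.ofReal (f x)) ∧
      ∀ x, f x ≤ 2 / σ * max (m / σ) 1 := by
  have := hZ.isGaussian_map
  have law_eq : P.map (fun ω => ⨆ j, Z ω j) = (P.map Z).map fun z => ⨆ j, z j :=
    (AEMeasurable.map_map_of_aemeasurable measurable_iSup_eval.aemeasurable hZ.aemeasurable).symm
  have mean_nonneg (j : ι) : 0 ≤ ∫ z, z j ∂P.map Z := by
    rw [integral_map hZ.aemeasurable (measurable_pi_apply j).aestronglyMeasurable]
    exact hmean j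
  have variance_eq (j : ι) : Var[fun z => z j; P.map Z] = σ ^ 2 := by
    rw [variance_map (measurable_pi_apply j).aemeasurable hZ.aemeasurable]
    exact hvar j
  have half_le_cdf : 1 / 2 ≤ cdf ((P.map Z).map fun z => ⨆ j, z j) m := by
    have := hZ.isProbabilityMeasure
    rw [cdf_eq_real, map_measureReal_apply measurable_iSup_eval measurableSet_Iic,
      map_measureReal_apply_of_aemeasurable hZ.aemeasurable
        (measurable_iSup_eval measurableSet_Iic)]
    calc (1 / 2 : ℝ) = ((1 : ℝ≥0∞) / 2).toReal := by norm_num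
      _ ≤ _ := ENNReal.toReal_mono (measure_ne_top P _) hm
  rw [law_eq]
  exact exists_bounded_density_of_le_smul (gaussianHazardBound_nonneg hσ m) <|
    le_smul_volume_of_cdf_sub_le fun x y =>
      cdf_map_iSup_sub_le_of_median hσ mean_nonneg variance_eq half_le_cdf

end GaussianMaximum

lemma hasGaussianLaw_of_forall_sum {ι Ω : Type*} [Fintype ι] [MeasurableSpace Ω] {P : Measure Ω}
    {Z : Ω → ι → ℝ} (hZ : AEMeasurable Z P)
    (hgauss : ∀ t : ι → ℝ, ∃ (m : ℝ) (v : ℝ≥0),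
      P.map (fun ω => ∑ j, t j * Z ω j) = gaussianReal m v) :
    HasGaussianLaw Z P := by
  classical
  refine ⟨isGaussian_of_map_eq_gaussianReal fun L => ?_⟩
  obtain ⟨m, v, law⟩ := hgauss fun j => L fun i => if j = i then 1 else 0
  refine ⟨m, v, ?_⟩
  have L_comp : L ∘ Z = fun ω => ∑ j, L (fun i => if j = i then 1 else 0) * Z ω j := by
    ext ω
    rw [Function.comp_apply, ← L.coe_coe, LinearMap.pi_apply_eq_sum_univ]
    simp only [smul_eq_mul, mul_comm, L.coe_coe]
  rw [AEMeasurable.map_map_of_aemeasurable L.continuous.aemeasurable hZ, L_comp, law]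

/-- Supplemental Lemma (lm:auxdensity): if `Z ∈ ℝ^d` is jointly Gaussian with `E[Z_j] ≥ 0`
and `Var(Z_j) = σ² > 0` for all `j`, `S = max_j Z_j`, and `m` is a median of `S`, then the
law of `S` is absolutely continuous with a density bounded by `(2/σ) max{m/σ, 1}`. -/
theorem stmt_10 (d : ℕ) (hd : 1 ≤ d) (σ : ℝ) (hσ : 0 < σ)
    (Ω : Type) (mΩ : MeasurableSpace Ω) (P : Measure Ω) [IsProbabilityMeasure P]
    (Z : Ω → (Fin d → ℝ)) (hZmeas : Measurable Z)
    (hgauss : ∀ t : Fin d → ℝ, ∃ (μ : ℝ) (v : ℝ≥0),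
      P.map (fun ω => ∑ j, t j * Z ω j) = gaussianReal μ v)
    (hmean : ∀ j, 0 ≤ ∫ ω, Z ω j ∂P)
    (hvar : ∀ j, ∫ ω, (Z ω j - ∫ ω', Z ω' j ∂P) ^ 2 ∂P = σ ^ 2)
    (m : ℝ)
    (hmed1 : (1 : ℝ≥0∞) / 2 ≤ P {ω | (⨆ j, Z ω j) ≤ m})
    (hmed2 : (1 : ℝ≥0∞) / 2 ≤ P {ω | m ≤ ⨆ j, Z ω j}) :
    ∃ f : ℝ → ℝ, Measurable f ∧ (∀ x, 0 ≤ f x) ∧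
      P.map (fun ω => ⨆ j, Z ω j) =
        MeasureTheory.volume.withDensity (fun x => ENNReal.ofReal (f x)) ∧
      ∀ x, f x ≤ 2 / σ * max (m / σ) 1 := by
  have : Nonempty (Fin d) := ⟨⟨0, hd⟩⟩
  refine stmt_10_general (hasGaussianLaw_of_forall_sum hZmeas.aemeasurable hgauss) hσ hmean
    (fun j => ?_) hmed1
  rw [variance_eq_integral (by fun_prop), hvar j]
end

section
/- Let G be the Moore–Penrose pseudoinverse of AAᵀ, let Ω be a symmetric p×p real matrix, and let v ∈ ℝ^d. Then sup{ ⟨AᵀG s, v⟩ : s ∈ ℝ^p, AᵀG s ≤ 0, ‖Ω G s‖₁ ≤ 1 } = sup{ ⟨AᵀA x, v⟩ : x ∈ ℝ^d, AᵀA x ≤ 0, ‖Ω A x‖₁ ≤ 1 }. -/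
open Matrix

/-! The pseudoinverse `G` of `A * Aᵀ` has the same column space as `A`, so `G s` and `A x` sweep out
the same vectors and the two programs have the same feasible values. For the column spaces, write
`M = A * Aᵀ`. Since `G * M` is symmetric, `G = G * M * G = M * Gᵀ * G`, and transposing
`M * (G * M) = M` gives `G * M * M = M`, in which the last factor `Aᵀ` can be cancelled to give
`G * M * A = A`. -/

section ColumnSpace

variable {l m n R : Type*}

theorem range_mulVec_mul_subset [NonUnitalSemiring R] [Fintype m] [Fintype n]
    (B : Matrix l m R) (C : Matrix m n R) :
    Set.range (B * C).mulVec ⊆ Set.range B.mulVec := by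
  rintro _ ⟨x, rfl⟩
  exact ⟨C *ᵥ x, mulVec_mulVec x B C⟩

variable [Fintype m]

theorem mul_mul_conjTranspose_left_inj [Fintype n] [NonUnitalRing R] [PartialOrder R]
    [StarRing R] [StarOrderedRing R] [NoZeroDivisors R] {A : Matrix m n R} {B C : Matrix l m R} :
    B * (A * Aᴴ) = C * (A * Aᴴ) ↔ B * A = C * A := by
  rw [← sub_eq_zero, ← Matrix.sub_mul, mul_self_mul_conjTranspose_eq_zero, Matrix.sub_mul,
    sub_eq_zero]

theorem mul_conjTranspose_eq_self_of_mul_eq_self [NonUnitalSemiring R] [StarRing R]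
    {M : Matrix l m R} {P : Matrix m m R} (hP : P.IsHermitian) (h : M * P = M) :
    P * Mᴴ = Mᴴ := by
  simpa only [conjTranspose_mul, hP.eq] using congrArg conjTranspose h

theorem range_mulVec_subset_range_conjTranspose_mulVec [Fintype n] [NonUnitalSemiring R]
    [StarRing R] {G : Matrix m n R} {M : Matrix n m R} (hGMG : G * M * G = G)
    (hGM : (G * M).IsHermitian) :
    Set.range G.mulVec ⊆ Set.range Mᴴ.mulVec := by
  have hG : G = Mᴴ * (Gᴴ * G) :=
    calc G = (G * M)ᴴ * G := by rw [hGM.eq, hGMG]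
      _ = Mᴴ * (Gᴴ * G) := by rw [conjTranspose_mul, Matrix.mul_assoc]
  rw [hG]
  exact range_mulVec_mul_subset Mᴴ (Gᴴ * G)

variable [Fintype n] [Ring R] [PartialOrder R] [StarRing R] [StarOrderedRing R] [NoZeroDivisors R]
  {A : Matrix m n R} {G : Matrix m m R}

theorem mul_mul_conjTranspose_mul_self
    (hMGM : A * Aᴴ * G * (A * Aᴴ) = A * Aᴴ) (hGM : (G * (A * Aᴴ)).IsHermitian) :
    G * (A * Aᴴ) * A = A := by
  classical
  have hMGM' : A * Aᴴ * (G * (A * Aᴴ)) = A * Aᴴ := by rw [← Matrix.mul_assoc, hMGM]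
  have hGMM : G * (A * Aᴴ) * (A * Aᴴ) = A * Aᴴ := by
    simpa only [(isHermitian_mul_conjTranspose_self A).eq] using
      mul_conjTranspose_eq_self_of_mul_eq_self hGM hMGM'
  simpa only [Matrix.one_mul] using
    mul_mul_conjTranspose_left_inj.mp (hGMM.trans (Matrix.one_mul (A * Aᴴ)).symm)

theorem range_mulVec_eq_of_pseudoinverse_mul_conjTranspose
    (hMGM : A * Aᴴ * G * (A * Aᴴ) = A * Aᴴ) (hGMG : G * (A * Aᴴ) * G = G)
    (hGM : (G * (A * Aᴴ)).IsHermitian) :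
    Set.range G.mulVec = Set.range A.mulVec := by
  apply Set.Subset.antisymm
  · have hGM_range : Set.range G.mulVec ⊆ Set.range (A * Aᴴ).mulVec := by
      simpa only [(isHermitian_mul_conjTranspose_self A).eq] using
        range_mulVec_subset_range_conjTranspose_mulVec hGMG hGM
    exact hGM_range.trans (range_mulVec_mul_subset A Aᴴ)
  · have hA : A = G * (A * Aᴴ * A) := by
      rw [← Matrix.mul_assoc, mul_mul_conjTranspose_mul_self hMGM hGM]
    rw [hA]
    exact range_mulVec_mul_subset G (A * Aᴴ * A)

end ColumnSpace

theorem stmt_12_general {m n q : Type*} [Fintype m] [Fintype n] [Fintype q]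
    {A : Matrix m n ℝ} {G : Matrix m m ℝ}
    (hMGM : A * Aᵀ * G * (A * Aᵀ) = A * Aᵀ) (hGMG : G * (A * Aᵀ) * G = G)
    (hGM : (G * (A * Aᵀ))ᵀ = G * (A * Aᵀ)) (Ω : Matrix q m ℝ) (v : n → ℝ) :
    {r : ℝ | ∃ s : m → ℝ, (∀ i, (Aᵀ *ᵥ (G *ᵥ s)) i ≤ 0) ∧
        ∑ i, |(Ω *ᵥ (G *ᵥ s)) i| ≤ 1 ∧ r = Aᵀ *ᵥ (G *ᵥ s) ⬝ᵥ v} =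
      {r : ℝ | ∃ x : n → ℝ, (∀ i, (Aᵀ *ᵥ (A *ᵥ x)) i ≤ 0) ∧
        ∑ i, |(Ω *ᵥ (A *ᵥ x)) i| ≤ 1 ∧ r = Aᵀ *ᵥ (A *ᵥ x) ⬝ᵥ v} := by
  have hrange : Set.range G.mulVec = Set.range A.mulVec := by
    simp only [← conjTranspose_eq_transpose_of_trivial] at hMGM hGMG hGM
    exact range_mulVec_eq_of_pseudoinverse_mul_conjTranspose hMGM hGMG hGM
  ext r
  let IsFeasibleValue (y : m → ℝ) : Prop :=
    (∀ i, (Aᵀ *ᵥ y) i ≤ 0) ∧ ∑ i, |(Ω *ᵥ y) i| ≤ 1 ∧ r = Aᵀ *ᵥ y ⬝ᵥ v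
  calc (∃ s, IsFeasibleValue (G *ᵥ s)) ↔ ∃ y ∈ Set.range G.mulVec, IsFeasibleValue y :=
        Set.exists_range_iff.symm
    _ ↔ ∃ y ∈ Set.range A.mulVec, IsFeasibleValue y := by rw [hrange]
    _ ↔ ∃ x, IsFeasibleValue (A *ᵥ x) := Set.exists_range_iff

/-- Display (eq:tnpos-intermediate): for `G` the Moore–Penrose pseudoinverse of `A Aᵀ`, a
symmetric matrix `Ω`, and any `v ∈ ℝ^d`,
`sup{⟨Aᵀ G s, v⟩ : Aᵀ G s ≤ 0, ‖Ω G s‖₁ ≤ 1} = sup{⟨Aᵀ A x, v⟩ : Aᵀ A x ≤ 0, ‖Ω A x‖₁ ≤ 1}`. -/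
theorem stmt_12 (p d : ℕ) (A : Matrix (Fin p) (Fin d) ℝ) (G Ω : Matrix (Fin p) (Fin p) ℝ)
    (hΩ : Ωᵀ = Ω)
    (hG1 : A * Aᵀ * G * (A * Aᵀ) = A * Aᵀ) (hG2 : G * (A * Aᵀ) * G = G)
    (hG3 : (A * Aᵀ * G)ᵀ = A * Aᵀ * G) (hG4 : (G * (A * Aᵀ))ᵀ = G * (A * Aᵀ))
    (v : Fin d → ℝ) :
    sSup {r : ℝ | ∃ s : Fin p → ℝ, (∀ i, Aᵀ.mulVec (G.mulVec s) i ≤ 0) ∧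
        (∑ i, |Ω.mulVec (G.mulVec s) i|) ≤ 1 ∧ r = Aᵀ.mulVec (G.mulVec s) ⬝ᵥ v} =
      sSup {r : ℝ | ∃ x : Fin d → ℝ, (∀ i, Aᵀ.mulVec (A.mulVec x) i ≤ 0) ∧
        (∑ i, |Ω.mulVec (A.mulVec x) i|) ≤ 1 ∧ r = Aᵀ.mulVec (A.mulVec x) ⬝ᵥ v} :=
  congrArg sSup (stmt_12_general hG1 hG2 hG4 Ω v)
end

section
/- Let Ω̂ and Ω be symmetric p×p real matrices with Ω = Ω Ω̂† Ω̂, let M be any p×p real matrix, and define V̂ = {s ∈ ℝ^p : ‖Ω̂ M s‖₁ ≤ 1}. Then sup_{s ∈ V̂} ‖Ω M s‖₁ ≤ 1 + ‖(Ω̂ − Ω) Ω̂†‖_{o,1}. -/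
open Matrix

/-- The operator norm `‖T‖_{o,1} = sup_{‖v‖₁ ≤ 1} ‖T v‖₁` of a square matrix. -/
noncomputable def l1OpNorm {p : ℕ} (T : Matrix (Fin p) (Fin p) ℝ) : ℝ :=
  sSup {r : ℝ | ∃ v : Fin p → ℝ, (∑ i, |v i|) ≤ 1 ∧ r = ∑ i, |T.mulVec v i|}

/-! Since `A G A = A` and `B G A = B`, the difference `A x - B x = (A - B) G (A x)` depends on `x`
only through `A x`, so its `ℓ¹` norm is at most `‖(A - B) G‖_{o,1} ‖A x‖₁`; the bound on `B x` is
then the triangle inequality. -/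

section l1OpNorm

variable {p : ℕ} (T : Matrix (Fin p) (Fin p) ℝ)

theorem l1OpNorm_eq_norm_toLpLin :
    l1OpNorm T = ‖(toLpLin 1 1 T).toContinuousLinearMap‖ := by
  rw [← ContinuousLinearMap.sSup_unitClosedBall_eq_norm, l1OpNorm]
  congr 1
  ext r
  simp [(WithLp.toLp_surjective 1).exists, PiLp.norm_eq_of_L1, eq_comm]

theorem l1OpNorm_nonneg : 0 ≤ l1OpNorm T :=
  l1OpNorm_eq_norm_toLpLin T ▸ norm_nonneg _

theorem sum_abs_mulVec_le_l1OpNorm_mul (v : Fin p → ℝ) :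
    ∑ i, |(T *ᵥ v) i| ≤ l1OpNorm T * ∑ i, |v i| := by
  simpa [l1OpNorm_eq_norm_toLpLin, PiLp.norm_eq_of_L1] using
    (toLpLin 1 1 T).toContinuousLinearMap.le_opNorm (WithLp.toLp 1 v)

end l1OpNorm

theorem mulVec_sub_mulVec_of_mul_mul_eq {m n R : Type*} [Fintype m] [Fintype n]
    [NonUnitalRing R] {A B : Matrix m n R} {G : Matrix n m R}
    (hA : A * G * A = A) (hB : B * G * A = B) (x : n → R) :
    A *ᵥ x - B *ᵥ x = ((A - B) * G) *ᵥ (A *ᵥ x) := by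
  rw [mulVec_mulVec, Matrix.sub_mul, Matrix.sub_mul, hA, hB, sub_mulVec]

theorem stmt_17_general {p : ℕ} {n : Type*} [Fintype n] {A B : Matrix (Fin p) n ℝ}
    {G : Matrix n (Fin p) ℝ} (hA : A * G * A = A) (hB : B * G * A = B) (x : n → ℝ) :
    ∑ i, |(B *ᵥ x) i| ≤ (1 + l1OpNorm ((A - B) * G)) * ∑ i, |(A *ᵥ x) i| := by
  have hsub : ∑ i, |(A *ᵥ x - B *ᵥ x) i| ≤ l1OpNorm ((A - B) * G) * ∑ i, |(A *ᵥ x) i| := by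
    rw [mulVec_sub_mulVec_of_mul_mul_eq hA hB]
    exact sum_abs_mulVec_le_l1OpNorm_mul _ _
  calc ∑ i, |(B *ᵥ x) i|
      ≤ ∑ i, (|(A *ᵥ x) i| + |(A *ᵥ x - B *ᵥ x) i|) := by
        gcongr with i
        simpa using abs_sub ((A *ᵥ x) i) ((A *ᵥ x - B *ᵥ x) i)
    _ = ∑ i, |(A *ᵥ x) i| + ∑ i, |(A *ᵥ x - B *ᵥ x) i| := Finset.sum_add_distrib
    _ ≤ ∑ i, |(A *ᵥ x) i| + l1OpNorm ((A - B) * G) * ∑ i, |(A *ᵥ x) i| := by gcongr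
    _ = (1 + l1OpNorm ((A - B) * G)) * ∑ i, |(A *ᵥ x) i| := by ring

/-- Display (th:master2) in the proof of Theorem S.B: if `Ω̂`, `Ω` are symmetric with
`Ω = Ω Ω̂† Ω̂`, then for every `s` with `‖Ω̂ M s‖₁ ≤ 1` one has
`‖Ω M s‖₁ ≤ 1 + ‖(Ω̂ − Ω) Ω̂†‖_{o,1}`. -/
theorem stmt_17 (p : ℕ) (Ωhat Ω Ωhatd M : Matrix (Fin p) (Fin p) ℝ)
    (hs1 : Ωhatᵀ = Ωhat) (hs2 : Ωᵀ = Ω)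
    (hd1 : Ωhat * Ωhatd * Ωhat = Ωhat) (hd2 : Ωhatd * Ωhat * Ωhatd = Ωhatd)
    (hd3 : (Ωhat * Ωhatd)ᵀ = Ωhat * Ωhatd) (hd4 : (Ωhatd * Ωhat)ᵀ = Ωhatd * Ωhat)
    (hcons : Ω = Ω * Ωhatd * Ωhat) :
    ∀ s : Fin p → ℝ, (∑ i, |Ωhat.mulVec (M.mulVec s) i|) ≤ 1 →
      (∑ i, |Ω.mulVec (M.mulVec s) i|) ≤ 1 + l1OpNorm ((Ωhat - Ω) * Ωhatd) := fun s hs ↦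
  (stmt_17_general hd1 hcons.symm (M *ᵥ s)).trans <|
    mul_le_of_le_one_right (add_nonneg zero_le_one (l1OpNorm_nonneg _)) hs
end
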